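/- arXiv:2012.12952 — 5 statements merged into one kernel-verified Lean document; each statement's English description precedes it below -/
import Mathlib

section
/- Let Y be a geodesic metric space and let E : Y → ℝ ∪ {+∞} be λ-convex, λ ∈ ℝ, and lower semicontinuous, with D(E) nonempty. Then for every y ∈ D(E) the descending slope admits the global representation |∂⁻E|(y) = sup_{z ≠ y} max( (E(y) − E(z))/d(y,z) + (λ/2)·d(y,z), 0 ). -/
open Filter MeasureTheory Set Bornology
open scoped ENNReal Topology NNReal

/-- A (constant-speed, minimizing) geodesic defined on `[0,1]`:
`d(γ_s, γ_t) = |s - t| * d(γ_0, γ_1)` for all `s, t ∈ [0,1]`. -/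
def IsGeodesic {Y : Type*} [MetricSpace Y] (γ : ℝ → Y) : Prop :=
  ∀ s ∈ Set.Icc (0:ℝ) 1, ∀ t ∈ Set.Icc (0:ℝ) 1,
    dist (γ s) (γ t) = |s - t| * dist (γ 0) (γ 1)

/-- A metric space is geodesic if every two points are joined by a geodesic. -/
def GeodesicSpace (Y : Type*) [MetricSpace Y] : Prop :=
  ∀ x y : Y, ∃ γ : ℝ → Y, IsGeodesic γ ∧ γ 0 = x ∧ γ 1 = y

/-- The CAT(0) condition: geodesic space satisfying the comparison inequality
`d²(γ_t, a) ≤ (1-t)·d²(γ_0, a) + t·d²(γ_1, a) − t(1-t)·d²(γ_0, γ_1)`.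
(Completeness is required separately as a typeclass assumption.) -/
def Cat0 (Y : Type*) [MetricSpace Y] : Prop :=
  GeodesicSpace Y ∧
    ∀ γ : ℝ → Y, IsGeodesic γ → ∀ a : Y, ∀ t ∈ Set.Icc (0:ℝ) 1,
      dist (γ t) a ^ 2 ≤ (1 - t) * dist (γ 0) a ^ 2 + t * dist (γ 1) a ^ 2
        - t * (1 - t) * dist (γ 0) (γ 1) ^ 2

/-- A subset is geodesically convex if every geodesic joining two of its points
lies entirely inside it. -/
def GeodesicConvex {Y : Type*} [MetricSpace Y] (C : Set Y) : Prop :=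
  ∀ γ : ℝ → Y, IsGeodesic γ → γ 0 ∈ C → γ 1 ∈ C → ∀ t ∈ Set.Icc (0:ℝ) 1, γ t ∈ C

/-- `lam`-convexity along geodesics of an extended-real-valued functional:
`E(γ_t) ≤ (1-t)E(γ_0) + tE(γ_1) − (lam/2)t(1−t)d²(γ_0,γ_1)`. -/
def LamConvex {Y : Type*} [MetricSpace Y] (lam : ℝ) (E : Y → EReal) : Prop :=
  ∀ γ : ℝ → Y, IsGeodesic γ → ∀ t ∈ Set.Icc (0:ℝ) 1,
    E (γ t) ≤ ((1 - t : ℝ) : EReal) * E (γ 0) + ((t : ℝ) : EReal) * E (γ 1)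
      - ((lam / 2 * t * (1 - t) * dist (γ 0) (γ 1) ^ 2 : ℝ) : EReal)

/-- The descending slope `|∂⁻E|(y) = limsup_{z→y} (E(y)−E(z))⁺ / d(y,z)`,
set to `∞` outside the domain `{E < ∞}` of `E`. -/
noncomputable def descendingSlope {Y : Type*} [MetricSpace Y] (E : Y → EReal) (y : Y) :
    ℝ≥0∞ :=
  if E y = ⊤ then ⊤
  else Filter.limsup (fun z => ENNReal.ofReal ((E y - E z).toReal / dist y z))
      (nhdsWithin y {y}ᶜ)

/-- `ω(y; (y_n)) := limsup_n d(y, y_n)²`. -/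
noncomputable def asymptoticRadius {Y : Type*} [MetricSpace Y] (yn : ℕ → Y) (y : Y) : ℝ :=
  Filter.limsup (fun n => dist y (yn n) ^ 2) Filter.atTop

/-- Weak convergence of a bounded sequence: `y` is an asymptotic center
(i.e. a minimizer of `ω(·; ·)`) of every subsequence. -/
def WeakConv {Y : Type*} [MetricSpace Y] (yn : ℕ → Y) (y : Y) : Prop :=
  Bornology.IsBounded (Set.range yn) ∧
    ∀ φ : ℕ → ℕ, StrictMono φ →
      ∀ z : Y, asymptoticRadius (yn ∘ φ) y ≤ asymptoticRadius (yn ∘ φ) z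

/-- Absolute continuity on a set `I ⊆ ℝ`: there is a nonnegative integrable `g`
with `d(y_s, y_t) ≤ ∫_s^t g` for `s ≤ t` in `I`. -/
def AbsContOnSet {Y : Type*} [MetricSpace Y] (y : ℝ → Y) (I : Set ℝ) : Prop :=
  ∃ g : ℝ → ℝ, (∀ t, 0 ≤ g t) ∧ MeasureTheory.IntegrableOn g I ∧
    ∀ s ∈ I, ∀ t ∈ I, s ≤ t → dist (y s) (y t) ≤ ∫ r in s..t, g r

/-- Absolute continuity on the interval `[a,b]`. -/
def AbsContOn {Y : Type*} [MetricSpace Y] (y : ℝ → Y) (a b : ℝ) : Prop :=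
  AbsContOnSet y (Set.Icc a b)

/-- Local absolute continuity on `(0,∞)`. -/
def LocAbsCont {Y : Type*} [MetricSpace Y] (y : ℝ → Y) : Prop :=
  ∀ a b : ℝ, 0 < a → a ≤ b → AbsContOn y a b

/-- The Evolution Variational Inequality: for every `z`, for a.e. `t > 0` the
derivative of `t ↦ ½ d²(y_t, z)` exists and
`(d/dt)(½d²(y_t,z)) + E(y_t) + (lam/2)d²(y_t,z) ≤ E(z)`. -/
def EVI {Y : Type*} [MetricSpace Y] (lam : ℝ) (E : Y → EReal) (y : ℝ → Y) : Prop :=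
  ∀ z : Y, ∀ᵐ t ∂(MeasureTheory.volume.restrict (Set.Ioi (0:ℝ))),
    ∃ d' : ℝ, HasDerivAt (fun s => dist (y s) z ^ 2 / 2) d' t ∧
      (d' : EReal) + E (y t) + ((lam / 2 * dist (y t) z ^ 2 : ℝ) : EReal) ≤ E z

/-- A gradient flow trajectory for `E` starting from `y₀`: a locally absolutely
continuous curve on `(0,∞)` converging to `y₀` at `0` and satisfying the EVI. -/
def GradientFlow {Y : Type*} [MetricSpace Y] (lam : ℝ) (E : Y → EReal) (y₀ : Y)
    (y : ℝ → Y) : Prop :=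
  LocAbsCont y ∧ Filter.Tendsto y (nhdsWithin 0 (Set.Ioi 0)) (nhds y₀) ∧ EVI lam E y

/-!
Along a geodesic `γ` from `y` to `z`, dividing the `λ`-convexity inequality by `t * d(y, z)` shows
that the difference quotient of `E` between `y` and `γ t` is at least
`(E(y) - E(z)) / d(y, z) + (λ / 2) * (1 - t) * d(y, z)`. Since `γ t → y` as `t → 0`, the descending
slope dominates the limit of this bound. Conversely, the correction `(λ / 2) * d(y, z)` vanishes as
`z → y`, so the supremum of the corrected quotients dominates the limsup of the uncorrected ones.
-/

section Limsup

variable {α β : Type*} [CompleteLinearOrder β] [TopologicalSpace β] [OrderTopology β]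
  {l : Filter α} {u v : α → β} {b : β}

theorem limsup_le_of_eventuallyLE_of_tendsto (huv : u ≤ᶠ[l] v) (hv : Tendsto v l (𝓝 b)) :
    limsup u l ≤ b := by
  rcases l.eq_or_neBot with rfl | _
  · simp
  · exact (limsup_le_limsup huv).trans_eq hv.limsup_eq

theorem le_limsup_of_tendsto_of_eventuallyLE [l.NeBot] (hu : Tendsto u l (𝓝 b))
    (huv : u ≤ᶠ[l] v) : b ≤ limsup v l :=
  hu.limsup_eq.symm.trans_le (limsup_le_limsup huv)

end Limsup

section Geodesic

variable {Y : Type*} [MetricSpace Y] {γ : ℝ → Y}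

theorem IsGeodesic.dist_zero_left (hγ : IsGeodesic γ) {t : ℝ} (ht : t ∈ Icc (0 : ℝ) 1) :
    dist (γ 0) (γ t) = t * dist (γ 0) (γ 1) := by
  rw [hγ 0 (left_mem_Icc.2 zero_le_one) t ht, zero_sub, abs_neg, abs_of_nonneg ht.1]

theorem IsGeodesic.tendsto_nhdsNE (hγ : IsGeodesic γ) (hne : γ 0 ≠ γ 1) :
    Tendsto γ (𝓝[>] 0) (𝓝[≠] (γ 0)) := by
  have hIoc : ∀ᶠ t in 𝓝[>] (0 : ℝ), t ∈ Ioc (0 : ℝ) 1 := Ioc_mem_nhdsGT one_pos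
  have hdist : ∀ᶠ t in 𝓝[>] (0 : ℝ), t * dist (γ 0) (γ 1) = dist (γ t) (γ 0) :=
    hIoc.mono fun t ht ↦ by rw [dist_comm (γ t), hγ.dist_zero_left (Ioc_subset_Icc_self ht)]
  have hzero : Tendsto (fun t : ℝ ↦ t * dist (γ 0) (γ 1)) (𝓝[>] 0) (𝓝 0) :=
    tendsto_nhdsWithin_of_tendsto_nhds <| Continuous.tendsto' (by fun_prop) _ _ (zero_mul _)
  refine tendsto_nhdsWithin_iff.2 ⟨tendsto_iff_dist_tendsto_zero.2 (hzero.congr' hdist), ?_⟩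
  filter_upwards [hIoc, hdist] with t ht htd
  exact dist_pos.1 (htd ▸ mul_pos ht.1 (dist_pos.2 hne))

end Geodesic

/-- The `lam`-convexity inequality for `E` along the single curve `γ`, so that `LamConvex lam E`
says that it holds along every geodesic. It allows one to ask for convexity only along some
geodesic between two given points. -/
def LamConvexAlong {Y : Type*} [MetricSpace Y] (lam : ℝ) (E : Y → EReal) (γ : ℝ → Y) : Prop :=
  ∀ t ∈ Icc (0 : ℝ) 1,
    E (γ t) ≤ ((1 - t : ℝ) : EReal) * E (γ 0) + (t : EReal) * E (γ 1)
      - ((lam / 2 * t * (1 - t) * dist (γ 0) (γ 1) ^ 2 : ℝ) : EReal)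

namespace LamConvexAlong

variable {Y : Type*} [MetricSpace Y] {lam : ℝ} {E : Y → EReal} {γ : ℝ → Y}

theorem mul_toReal_sub_add_le (hconv : LamConvexAlong lam E γ) (hbot : ∀ x, E x ≠ ⊥)
    (h0 : E (γ 0) ≠ ⊤) (h1 : E (γ 1) ≠ ⊤) {t : ℝ} (ht : t ∈ Icc (0 : ℝ) 1) :
    t * (E (γ 0) - E (γ 1)).toReal + lam / 2 * t * (1 - t) * dist (γ 0) (γ 1) ^ 2 ≤
      (E (γ 0) - E (γ t)).toReal := by
  have hE := hconv t ht
  have hbot_t := hbot (γ t)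
  lift E (γ 0) to ℝ using ⟨h0, hbot _⟩ with a
  lift E (γ 1) to ℝ using ⟨h1, hbot _⟩ with b
  have htop_t : E (γ t) ≠ ⊤ := ne_top_of_le_ne_top (mod_cast EReal.coe_ne_top _) hE
  lift E (γ t) to ℝ using ⟨htop_t, hbot_t⟩ with c
  norm_cast at hE
  simp only [← EReal.coe_sub, EReal.toReal_coe]
  linarith

theorem quotient_add_le_quotient (hconv : LamConvexAlong lam E γ) (hγ : IsGeodesic γ)
    (hbot : ∀ x, E x ≠ ⊥) (hne : γ 0 ≠ γ 1) (h0 : E (γ 0) ≠ ⊤) (h1 : E (γ 1) ≠ ⊤) {t : ℝ}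
    (ht : t ∈ Ioc (0 : ℝ) 1) :
    (E (γ 0) - E (γ 1)).toReal / dist (γ 0) (γ 1) + lam / 2 * (1 - t) * dist (γ 0) (γ 1) ≤
      (E (γ 0) - E (γ t)).toReal / dist (γ 0) (γ t) := by
  have ht' := Ioc_subset_Icc_self ht
  have hd : 0 < dist (γ 0) (γ 1) := dist_pos.2 hne
  have ht0 : 0 < t := ht.1
  rw [hγ.dist_zero_left ht']
  calc (E (γ 0) - E (γ 1)).toReal / dist (γ 0) (γ 1) + lam / 2 * (1 - t) * dist (γ 0) (γ 1)
      = (t * (E (γ 0) - E (γ 1)).toReal + lam / 2 * t * (1 - t) * dist (γ 0) (γ 1) ^ 2) /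
          (t * dist (γ 0) (γ 1)) := by field_simp
    _ ≤ (E (γ 0) - E (γ t)).toReal / (t * dist (γ 0) (γ 1)) := by
        gcongr
        exact hconv.mul_toReal_sub_add_le hbot h0 h1 ht'

end LamConvexAlong

section DescendingSlope

variable {Y : Type*} [MetricSpace Y] {E : Y → EReal}

theorem descendingSlope_of_ne_top {y : Y} (hy : E y ≠ ⊤) :
    descendingSlope E y =
      limsup (fun z ↦ ENNReal.ofReal ((E y - E z).toReal / dist y z)) (𝓝[≠] y) :=
  if_neg hy

theorem LamConvexAlong.ofReal_le_descendingSlope {lam : ℝ} {γ : ℝ → Y}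
    (hconv : LamConvexAlong lam E γ) (hγ : IsGeodesic γ) (hbot : ∀ x, E x ≠ ⊥)
    (hne : γ 0 ≠ γ 1) (h0 : E (γ 0) ≠ ⊤) (h1 : E (γ 1) ≠ ⊤) :
    ENNReal.ofReal
        ((E (γ 0) - E (γ 1)).toReal / dist (γ 0) (γ 1) + lam / 2 * dist (γ 0) (γ 1)) ≤
      descendingSlope E (γ 0) := by
  let bound (t : ℝ) : ℝ :=
    (E (γ 0) - E (γ 1)).toReal / dist (γ 0) (γ 1) + lam / 2 * (1 - t) * dist (γ 0) (γ 1)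
  let quotient (z : Y) : ℝ≥0∞ := ENNReal.ofReal ((E (γ 0) - E z).toReal / dist (γ 0) z)
  have hbound : Tendsto bound (𝓝[>] 0) (𝓝
      ((E (γ 0) - E (γ 1)).toReal / dist (γ 0) (γ 1) + lam / 2 * dist (γ 0) (γ 1))) :=
    tendsto_nhdsWithin_of_tendsto_nhds <|
      Continuous.tendsto' (by fun_prop) _ _ (by simp [bound])
  have hle : ∀ᶠ t in 𝓝[>] 0, ENNReal.ofReal (bound t) ≤ quotient (γ t) := by
    filter_upwards [Ioc_mem_nhdsGT one_pos] with t ht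
    exact ENNReal.ofReal_le_ofReal (hconv.quotient_add_le_quotient hγ hbot hne h0 h1 ht)
  calc _ ≤ limsup (quotient ∘ γ) (𝓝[>] 0) :=
        le_limsup_of_tendsto_of_eventuallyLE (ENNReal.tendsto_ofReal hbound) hle
    _ ≤ limsup quotient (𝓝[≠] (γ 0)) := (hγ.tendsto_nhdsNE hne).limsup_comp_le_limsup
    _ = descendingSlope E (γ 0) := (descendingSlope_of_ne_top h0).symm

theorem descendingSlope_le_of_forall_ofReal_le {y : Y} (hy : E y ≠ ⊤) {c : ℝ} {S : ℝ≥0∞}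
    (hS : ∀ z, z ≠ y → E z ≠ ⊤ →
      ENNReal.ofReal ((E y - E z).toReal / dist y z + c * dist y z) ≤ S) :
    descendingSlope E y ≤ S := by
  have hle : ∀ z, z ≠ y →
      ENNReal.ofReal ((E y - E z).toReal / dist y z) ≤ S + ENNReal.ofReal (-(c * dist y z)) := by
    intro z hzy
    by_cases hz : E z = ⊤
    · -- The quotient is `0` here, because `E y - ⊤ = ⊥` and `EReal.toReal ⊥ = 0`.
      simp [hz]
    calc ENNReal.ofReal ((E y - E z).toReal / dist y z)
        = ENNReal.ofReal
            ((E y - E z).toReal / dist y z + c * dist y z + -(c * dist y z)) := by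
          rw [add_neg_cancel_right]
      _ ≤ ENNReal.ofReal ((E y - E z).toReal / dist y z + c * dist y z) +
            ENNReal.ofReal (-(c * dist y z)) := ENNReal.ofReal_add_le
      _ ≤ S + ENNReal.ofReal (-(c * dist y z)) := by
          gcongr
          exact hS z hzy hz
  have hlim : Tendsto (fun z ↦ S + ENNReal.ofReal (-(c * dist y z))) (𝓝[≠] y) (𝓝 S) :=
    tendsto_nhdsWithin_of_tendsto_nhds <| Continuous.tendsto'
      (continuous_const.add (ENNReal.continuous_ofReal.comp (by fun_prop))) _ _ (by simp)
  rw [descendingSlope_of_ne_top hy]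
  exact limsup_le_of_eventuallyLE_of_tendsto (eventually_nhdsWithin_of_forall hle) hlim

end DescendingSlope

theorem descendingSlope_global_representation_general {Y : Type*} [MetricSpace Y] {lam : ℝ}
    {E : Y → EReal} (hbot : ∀ x, E x ≠ ⊥) {y : Y} (hy : E y ≠ ⊤)
    (hconv : ∀ z, E z ≠ ⊤ →
      ∃ γ : ℝ → Y, IsGeodesic γ ∧ γ 0 = y ∧ γ 1 = z ∧ LamConvexAlong lam E γ) :
    descendingSlope E y =
      ⨆ z ∈ {z : Y | z ≠ y ∧ E z ≠ ⊤},
        ENNReal.ofReal ((E y - E z).toReal / dist y z + lam / 2 * dist y z) := by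
  apply le_antisymm
  · exact descendingSlope_le_of_forall_ofReal_le hy fun z hzy hz ↦
      le_iSup₂_of_le z ⟨hzy, hz⟩ le_rfl
  · refine iSup₂_le fun z ⟨hzy, hz⟩ ↦ ?_
    obtain ⟨γ, hγ, rfl, rfl, hconvγ⟩ := hconv z hz
    exact hconvγ.ofReal_le_descendingSlope hγ hbot hzy.symm hy hz

/-- **Global representation of the descending slope of a `λ`-convex lower semicontinuous
functional on a geodesic space**:
`|∂⁻E|(y) = sup_{z ≠ y} ((E(y) − E(z))/d(y,z) + (λ/2)d(y,z))⁺`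
(points `z` with `E z = ∞` contribute `0` to the supremum). -/
theorem descendingSlope_global_representation {Y : Type*} [MetricSpace Y]
    (hgeo : GeodesicSpace Y) (lam : ℝ) (E : Y → EReal)
    (hbot : ∀ y, E y ≠ ⊥) (hconv : LamConvex lam E) (hlsc : LowerSemicontinuous E)
    (hdom : ∃ y, E y ≠ ⊤) (y : Y) (hy : E y ≠ ⊤) :
    descendingSlope E y =
      ⨆ z ∈ {z : Y | z ≠ y ∧ E z ≠ ⊤},
        ENNReal.ofReal ((E y - E z).toReal / dist y z + lam / 2 * dist y z) :=
  descendingSlope_global_representation_general hbot hy fun z _ ↦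
    (hgeo y z).imp fun γ ⟨hγ, hγ0, hγ1⟩ ↦ ⟨hγ, hγ0, hγ1, hconv γ hγ⟩
end

section
/- Let Y be a geodesic metric space and let E : Y → ℝ ∪ {+∞} be λ-convex, λ ∈ ℝ, and lower semicontinuous, with D(E) nonempty. Then the extended descending slope y ↦ |∂⁻E|(y) (equal to +∞ outside D(E)) is a lower semicontinuous function from Y to [0, +∞]. -/
open Filter MeasureTheory Set Bornology
open scoped ENNReal Topology NNReal

/-!
Along a geodesic from `y` to `z`, convexity propagates an infinitesimal bound at `y` to all of the
geodesic. Hence, for finite `c`, `|∂⁻E|(y) ≤ c` is equivalent to the family of global inequalities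
`E y ≤ E z + c d(y, z) − (lam/2) d²(y, z)`, one for each `z`. For fixed `z` the right-hand side is
continuous in `y`, so lower semicontinuity of `E` makes each inequality a closed condition, and the
sublevel sets of the slope are intersections of closed sets.
-/

theorem continuous_const_add_coe {X : Type*} [TopologicalSpace X] (a : EReal) {f : X → ℝ}
    (hf : Continuous f) : Continuous fun x => a + (f x : EReal) :=
  continuous_iff_continuousAt.2 fun x =>
    (EReal.continuousAt_add (p := (a, (f x : EReal)))
      (.inr (EReal.coe_ne_bot _)) (.inr (EReal.coe_ne_top _))).comp
      (f := fun x => (a, (f x : EReal)))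
      (continuous_const.prodMk (continuous_coe_real_ereal.comp hf)).continuousAt

theorem isClosed_setOf_le_const_add_coe {X : Type*} [TopologicalSpace X] {f : X → EReal}
    (hf : LowerSemicontinuous f) (a : EReal) {g : X → ℝ} (hg : Continuous g) :
    IsClosed {x | f x ≤ a + (g x : EReal)} :=
  hf.isClosed_epigraph.preimage (continuous_id.prodMk (continuous_const_add_coe a hg))

section

variable {Y : Type*} [MetricSpace Y] {γ : ℝ → Y}

theorem IsGeodesic.continuousOn (hγ : IsGeodesic γ) : ContinuousOn γ (Icc 0 1) :=
  (LipschitzOnWith.of_dist_le_mul (K := nndist (γ 0) (γ 1)) fun s hs t ht => by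
    rw [hγ s hs t ht, coe_nndist, Real.dist_eq, mul_comm]).continuousOn

theorem IsGeodesic.tendsto_zero (hγ : IsGeodesic γ) : Tendsto γ (𝓝[>] 0) (𝓝 (γ 0)) :=
  ((hγ.continuousOn 0 unitInterval.zero_mem).mono Ioc_subset_Icc_self).mono_left
    (nhdsWithin_Ioc_eq_nhdsGT one_pos).ge

end

section

variable {Y : Type*} [MetricSpace Y] {E : Y → EReal} {lam : ℝ} {y : Y}

theorem ne_top_of_descendingSlope_ne_top (h : descendingSlope E y ≠ ⊤) : E y ≠ ⊤ :=
  fun hy => h (if_pos hy)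

theorem ofReal_sub_div_dist_le_iff {z : Y} (hy_bot : E y ≠ ⊥) (hy_top : E y ≠ ⊤) (hz_bot : E z ≠ ⊥)
    (hyz : y ≠ z) (c : ℝ≥0) :
    ENNReal.ofReal ((E y - E z).toReal / dist y z) ≤ c ↔
      E y ≤ E z + ((c * dist y z : ℝ) : EReal) := by
  lift E y to ℝ using ⟨hy_top, hy_bot⟩ with e
  rcases eq_or_ne (E z) ⊤ with hz | hz_top
  · -- Here `(E y - E z).toReal = (⊥ : EReal).toReal` is the junk value `0`, so both sides hold.
    simp [hz, -EReal.coe_mul]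
  lift E z to ℝ using ⟨hz_top, hz_bot⟩ with b
  rw [ENNReal.ofReal_le_coe, ← EReal.coe_sub, EReal.toReal_coe, div_le_iff₀ (dist_pos.2 hyz),
    sub_le_iff_le_add']
  norm_cast

theorem descendingSlope_le_iff_eventually (hbot : ∀ z, E z ≠ ⊥) (hy : E y ≠ ⊤) {c : ℝ≥0} :
    descendingSlope E y ≤ c ↔
      ∀ c' > c, ∀ᶠ z in 𝓝 y, E y ≤ E z + ((c' * dist y z : ℝ) : EReal) := by
  have quotient_iff (c' : ℝ≥0) :
      (∀ᶠ z in 𝓝[≠] y, ENNReal.ofReal ((E y - E z).toReal / dist y z) ≤ c') ↔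
        ∀ᶠ z in 𝓝 y, E y ≤ E z + ((c' * dist y z : ℝ) : EReal) := by
    rw [eventually_nhdsWithin_iff]
    refine eventually_congr (.of_forall fun z => ?_)
    rcases eq_or_ne y z with rfl | hyz
    · simp
    · simp [hyz.symm, ofReal_sub_div_dist_le_iff (hbot y) hy (hbot z) hyz]
  rw [descendingSlope, if_neg hy, limsup_le_iff']
  simp only [ENNReal.forall_ennreal, gt_iff_lt, ENNReal.coe_lt_coe, quotient_iff, le_top,
    eventually_true, implies_true, and_true]

theorem descendingSlope_le_of_forall_le (hbot : ∀ z, E z ≠ ⊥) (hy : E y ≠ ⊤) {c : ℝ≥0}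
    (h : ∀ z, E y ≤ E z + ((c * dist y z - lam / 2 * dist y z ^ 2 : ℝ) : EReal)) :
    descendingSlope E y ≤ c := by
  refine (descendingSlope_le_iff_eventually hbot hy).2 fun c' hc' => ?_
  have slope_near : ∀ᶠ z in 𝓝 y, c - lam / 2 * dist y z < c' :=
    ContinuousAt.eventually_lt (by fun_prop) continuousAt_const (by simpa using hc')
  filter_upwards [slope_near] with z hz
  refine (h z).trans (add_le_add_right (EReal.coe_le_coe ?_) _)
  linarith [mul_le_mul_of_nonneg_right hz.le (dist_nonneg (x := y) (y := z))]

theorem LamConvex.le_add_of_le_add_at (hconv : LamConvex lam E) {γ : ℝ → Y} (hγ : IsGeodesic γ)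
    (hbot : ∀ z, E z ≠ ⊥) (htop : E (γ 0) ≠ ⊤) {c t : ℝ} (ht : t ∈ Ioc (0 : ℝ) 1)
    (h : E (γ 0) ≤ E (γ t) + ((c * dist (γ 0) (γ t) : ℝ) : EReal)) :
    E (γ 0) ≤ E (γ 1) +
      ((c * dist (γ 0) (γ 1) - lam / 2 * (1 - t) * dist (γ 0) (γ 1) ^ 2 : ℝ) : EReal) := by
  have ht' := Ioc_subset_Icc_self ht
  have hconv_t := hconv γ hγ t ht'
  rw [hγ.dist_zero_left ht'] at h
  rcases eq_or_ne (E (γ 1)) ⊤ with h1 | h1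
  · simp only [h1, EReal.top_add_coe, le_top]
  generalize dist (γ 0) (γ 1) = d at *
  have h0_bot := hbot (γ 0)
  have h1_bot := hbot (γ 1)
  have ht_bot := hbot (γ t)
  lift E (γ 0) to ℝ using ⟨htop, h0_bot⟩ with e
  lift E (γ 1) to ℝ using ⟨h1, h1_bot⟩ with b
  norm_cast at hconv_t
  lift E (γ t) to ℝ using ⟨ne_top_of_le_ne_top (EReal.coe_ne_top _) hconv_t, ht_bot⟩ with f
  norm_cast at h hconv_t ⊢
  have scaled : t * e ≤ t * (b + (c * d - lam / 2 * (1 - t) * d ^ 2)) := by linarith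
  exact le_of_mul_le_mul_left scaled ht.1

theorem LamConvex.le_add_of_descendingSlope_le (hconv : LamConvex lam E) (hgeo : GeodesicSpace Y)
    (hbot : ∀ z, E z ≠ ⊥) {c : ℝ≥0} (hc : descendingSlope E y ≤ c) (z : Y) :
    E y ≤ E z + ((c * dist y z - lam / 2 * dist y z ^ 2 : ℝ) : EReal) := by
  have hy : E y ≠ ⊤ := ne_top_of_descendingSlope_ne_top (ne_top_of_le_ne_top ENNReal.coe_ne_top hc)
  obtain ⟨γ, hγ, rfl, rfl⟩ := hgeo y z
  set d := dist (γ 0) (γ 1)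
  have bound_of_gt : ∀ c' > c,
      E (γ 0) ≤ E (γ 1) + ((c' * d - lam / 2 * d ^ 2 : ℝ) : EReal) := fun c' hc' => by
    have bound_at : ∀ᶠ t in 𝓝[>] (0 : ℝ),
        E (γ 0) ≤ E (γ 1) + ((c' * d - lam / 2 * (1 - t) * d ^ 2 : ℝ) : EReal) := by
      filter_upwards [hγ.tendsto_zero.eventually
        ((descendingSlope_le_iff_eventually hbot hy).1 hc c' hc'), Ioc_mem_nhdsGT one_pos]
        with t hslope ht
      exact hconv.le_add_of_le_add_at hγ hbot hy ht hslope
    have hcont : Continuous fun t : ℝ =>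
        E (γ 1) + ((c' * d - lam / 2 * (1 - t) * d ^ 2 : ℝ) : EReal) :=
      continuous_const_add_coe _ (by fun_prop)
    simpa using ge_of_tendsto ((hcont.tendsto 0).mono_left nhdsWithin_le_nhds) bound_at
  have hcont : Continuous fun c' : ℝ≥0 => E (γ 1) + ((c' * d - lam / 2 * d ^ 2 : ℝ) : EReal) :=
    continuous_const_add_coe _ (by fun_prop)
  exact ge_of_tendsto ((hcont.tendsto c).mono_left nhdsWithin_le_nhds)
    (eventually_nhdsWithin_of_forall (s := Ioi c) bound_of_gt)

theorem LamConvex.descendingSlope_le_iff (hconv : LamConvex lam E) (hgeo : GeodesicSpace Y)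
    (hbot : ∀ z, E z ≠ ⊥) (hdom : ∃ z, E z ≠ ⊤) {c : ℝ≥0} :
    descendingSlope E y ≤ c ↔
      ∀ z, E y ≤ E z + ((c * dist y z - lam / 2 * dist y z ^ 2 : ℝ) : EReal) := by
  refine ⟨hconv.le_add_of_descendingSlope_le hgeo hbot, fun h => ?_⟩
  obtain ⟨z, hz⟩ := hdom
  have hy : E y ≠ ⊤ := ne_top_of_le_ne_top (EReal.add_ne_top hz (EReal.coe_ne_top _)) (h z)
  exact descendingSlope_le_of_forall_le hbot hy h

end

/-- **Lower semicontinuity of the (extended) descending slope** of a `λ`-convex lower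
semicontinuous functional on a geodesic space. -/
theorem descendingSlope_lowerSemicontinuous {Y : Type*} [MetricSpace Y]
    (hgeo : GeodesicSpace Y) (lam : ℝ) (E : Y → EReal)
    (hbot : ∀ y, E y ≠ ⊥) (hconv : LamConvex lam E) (hlsc : LowerSemicontinuous E)
    (hdom : ∃ y, E y ≠ ⊤) :
    LowerSemicontinuous (descendingSlope E) := by
  refine lowerSemicontinuous_iff_isClosed_preimage.2 fun c => ?_
  induction c using ENNReal.recTopCoe with
  | top => simp
  | coe c =>
    have sublevel_eq : descendingSlope E ⁻¹' Iic (c : ℝ≥0∞) =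
        ⋂ z, {y | E y ≤ E z + ((c * dist y z - lam / 2 * dist y z ^ 2 : ℝ) : EReal)} := by
      ext y
      simp only [mem_preimage, mem_Iic, mem_iInter, mem_ofPred_eq,
        hconv.descendingSlope_le_iff hgeo hbot hdom]
    rw [sublevel_eq]
    exact isClosed_iInter fun z => isClosed_setOf_le_const_add_coe hlsc (E z) (by fun_prop)
end

section
/- Let Y be a CAT(0) space, (y_n) a sequence in Y and y ∈ Y. Then d(y_n, y) → 0 if and only if y_n converges weakly to y and d(y_n, z) → d(y, z) for some z ∈ Y. -/
open Filter MeasureTheory Set Bornology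
open scoped ENNReal Topology NNReal

/-!
Passing to the limsup in the CAT(0) inequality shows that `ω(·; yn)` is strongly convex along
geodesics. Comparing an asymptotic center `y` with the points of the geodesic from `y` to `z` near
`y` therefore yields `ω(y) + d(y, z)² ≤ ω(z)`. If `d(yn, z) → d(y, z)`, the right-hand side is
`d(y, z)²`, so `ω(y) = 0`, which is strong convergence to `y`.
-/

section

variable {Y : Type*} [MetricSpace Y] {yn : ℕ → Y} {y z : Y}

/-- `y` is an asymptotic center of the sequence `yn`: a minimizer of `ω(·; yn)`. Boundedness of
`yn`, without which the radius takes junk values, is left as a separate hypothesis, as in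
`WeakConv`. -/
def IsAsymptoticCenter (yn : ℕ → Y) (y : Y) : Prop :=
  ∀ z : Y, asymptoticRadius yn y ≤ asymptoticRadius yn z

lemma asymptoticRadius_nonneg (yn : ℕ → Y) (y : Y) : 0 ≤ asymptoticRadius yn y := by
  rw [asymptoticRadius, limsup_eq]
  refine Real.sInf_nonneg fun a ha => ?_
  obtain ⟨n, hn⟩ := ha.exists
  exact (sq_nonneg _).trans hn

lemma asymptoticRadius_eq_of_tendsto_dist {r : ℝ}
    (h : Tendsto (fun n => dist (yn n) z) atTop (𝓝 r)) : asymptoticRadius yn z = r ^ 2 := by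
  simp only [asymptoticRadius, dist_comm z]
  exact (h.pow 2).limsup_eq

lemma eventually_dist_sq_lt_of_asymptoticRadius_lt (hb : IsBounded (range yn)) {r : ℝ}
    (h : asymptoticRadius yn y < r) : ∀ᶠ n in atTop, dist y (yn n) ^ 2 < r := by
  obtain ⟨R, hR⟩ := hb.subset_closedBall y
  refine eventually_lt_of_limsup_lt h (isBoundedUnder_of ⟨R ^ 2, fun n => ?_⟩)
  gcongr
  exact Metric.mem_closedBall'.1 (hR (mem_range_self n))

lemma asymptoticRadius_le_of_eventually_le {r : ℝ}
    (h : ∀ᶠ n in atTop, dist y (yn n) ^ 2 ≤ r) : asymptoticRadius yn y ≤ r :=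
  limsup_le_of_le (isBoundedUnder_of ⟨0, fun _ => sq_nonneg _⟩).isCoboundedUnder_le h

lemma asymptoticRadius_eq_zero_iff_tendsto (hb : IsBounded (range yn)) :
    asymptoticRadius yn y = 0 ↔ Tendsto yn atTop (𝓝 y) := by
  refine ⟨fun h => Metric.tendsto_nhds.2 fun ε hε => ?_, fun h => ?_⟩
  · have hlt : asymptoticRadius yn y < ε ^ 2 := h ▸ pow_pos hε 2
    filter_upwards [eventually_dist_sq_lt_of_asymptoticRadius_lt hb hlt] with n hn
    rw [dist_comm]
    exact lt_of_pow_lt_pow_left₀ 2 hε.le hn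
  · simpa using asymptoticRadius_eq_of_tendsto_dist (tendsto_iff_dist_tendsto_zero.1 h)

lemma isAsymptoticCenter_of_tendsto (h : Tendsto yn atTop (𝓝 y)) : IsAsymptoticCenter yn y := by
  intro z
  rw [(asymptoticRadius_eq_zero_iff_tendsto (Metric.isBounded_range_of_tendsto yn h)).2 h]
  exact asymptoticRadius_nonneg yn z

lemma WeakConv.of_tendsto (h : Tendsto yn atTop (𝓝 y)) : WeakConv yn y :=
  ⟨Metric.isBounded_range_of_tendsto yn h,
    fun _ hφ => isAsymptoticCenter_of_tendsto (h.comp hφ.tendsto_atTop)⟩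

lemma WeakConv.isAsymptoticCenter (h : WeakConv yn y) : IsAsymptoticCenter yn y :=
  h.2 id strictMono_id

namespace Cat0

lemma asymptoticRadius_geodesic_le (hY : Cat0 Y) (hb : IsBounded (range yn)) {γ : ℝ → Y}
    (hγ : IsGeodesic γ) {t : ℝ} (ht : t ∈ Icc (0 : ℝ) 1) :
    asymptoticRadius yn (γ t) ≤ (1 - t) * asymptoticRadius yn (γ 0)
      + t * asymptoticRadius yn (γ 1) - t * (1 - t) * dist (γ 0) (γ 1) ^ 2 := by
  refine le_of_forall_pos_le_add fun δ hδ => asymptoticRadius_le_of_eventually_le ?_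
  have near_radius (x : Y) : ∀ᶠ n in atTop, dist x (yn n) ^ 2 < asymptoticRadius yn x + δ :=
    eventually_dist_sq_lt_of_asymptoticRadius_lt hb (lt_add_of_pos_right _ hδ)
  filter_upwards [near_radius (γ 0), near_radius (γ 1)] with n h₀ h₁
  have ht' : 0 ≤ 1 - t := sub_nonneg.2 ht.2
  calc dist (γ t) (yn n) ^ 2
      ≤ (1 - t) * dist (γ 0) (yn n) ^ 2 + t * dist (γ 1) (yn n) ^ 2
          - t * (1 - t) * dist (γ 0) (γ 1) ^ 2 := hY.2 γ hγ (yn n) t ht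
    _ ≤ (1 - t) * (asymptoticRadius yn (γ 0) + δ) + t * (asymptoticRadius yn (γ 1) + δ)
          - t * (1 - t) * dist (γ 0) (γ 1) ^ 2 := by
        have := ht.1
        gcongr
    _ = _ := by ring

lemma asymptoticRadius_add_dist_sq_le (hY : Cat0 Y) (hb : IsBounded (range yn))
    (hy : IsAsymptoticCenter yn y) (z : Y) :
    asymptoticRadius yn y + dist y z ^ 2 ≤ asymptoticRadius yn z := by
  obtain ⟨γ, hγ, rfl, rfl⟩ := hY.1 y z
  have hle : ∀ t ∈ Ioc (0 : ℝ) 1, asymptoticRadius yn (γ 0) + (1 - t) * dist (γ 0) (γ 1) ^ 2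
      ≤ asymptoticRadius yn (γ 1) := by
    intro t ht
    have h := (hy (γ t)).trans
      (hY.asymptoticRadius_geodesic_le hb hγ (Ioc_subset_Icc_self ht))
    exact le_of_mul_le_mul_left (by linarith) ht.1
  have hlim : Tendsto (fun t : ℝ => asymptoticRadius yn (γ 0) + (1 - t) * dist (γ 0) (γ 1) ^ 2)
      (𝓝[>] 0) (𝓝 (asymptoticRadius yn (γ 0) + dist (γ 0) (γ 1) ^ 2)) :=
    tendsto_nhdsWithin_of_tendsto_nhds (Continuous.tendsto' (by fun_prop) _ _ (by simp))
  exact le_of_tendsto hlim (eventually_of_mem (Ioc_mem_nhdsGT zero_lt_one) hle)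

lemma tendsto_of_isAsymptoticCenter_of_tendsto_dist (hY : Cat0 Y) (hb : IsBounded (range yn))
    (hy : IsAsymptoticCenter yn y)
    (hz : Tendsto (fun n => dist (yn n) z) atTop (𝓝 (dist y z))) :
    Tendsto yn atTop (𝓝 y) := by
  have hle := hY.asymptoticRadius_add_dist_sq_le hb hy z
  rw [asymptoticRadius_eq_of_tendsto_dist hz, add_le_iff_nonpos_left] at hle
  exact (asymptoticRadius_eq_zero_iff_tendsto hb).1
    (hle.antisymm (asymptoticRadius_nonneg yn y))

end Cat0

end

theorem strong_iff_weak_and_dist_tendsto_general {Y : Type*} [MetricSpace Y]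
    (hY : Cat0 Y) (yn : ℕ → Y) (y : Y) :
    Tendsto (fun n => dist (yn n) y) atTop (𝓝 0) ↔
      WeakConv yn y ∧ ∃ z : Y, Tendsto (fun n => dist (yn n) z) atTop (𝓝 (dist y z)) := by
  rw [← tendsto_iff_dist_tendsto_zero]
  constructor
  · intro h
    exact ⟨.of_tendsto h, y, h.dist tendsto_const_nhds⟩
  · rintro ⟨hw, z, hz⟩
    exact hY.tendsto_of_isAsymptoticCenter_of_tendsto_dist hw.1 hw.isAsymptoticCenter hz

/-- **Strong convergence = weak convergence + convergence of one distance**: in a CAT(0)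
space, `d(y_n, y) → 0` iff `y_n ⇀ y` and `d(y_n, z) → d(y, z)` for some `z`. -/
theorem strong_iff_weak_and_dist_tendsto {Y : Type*} [MetricSpace Y] [CompleteSpace Y]
    (hY : Cat0 Y) (yn : ℕ → Y) (y : Y) :
    Filter.Tendsto (fun n => dist (yn n) y) Filter.atTop (nhds 0) ↔
      WeakConv yn y ∧
        ∃ z : Y, Filter.Tendsto (fun n => dist (yn n) z) Filter.atTop
          (nhds (dist y z)) :=
  strong_iff_weak_and_dist_tendsto_general hY yn y
end

section
/- Let Y be a CAT(0) space and E : Y → ℝ ∪ {+∞} a convex (i.e. 0-convex) and lower semicontinuous functional. Then E is sequentially weakly lower semicontinuous: if y_n converges weakly to y, then E(y) ≤ liminf_n E(y_n). -/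
open Filter MeasureTheory Set Bornology
open scoped ENNReal Topology NNReal

/-!
A closed geodesically convex set `C` of a CAT(0) space is closed under weak limits, and lower
semicontinuity together with quasiconvexity only concern the sublevel sets of the functional.

For `p ∈ C` and a sequence `u` in `C`, the CAT(0) inequality on the geodesic from `p` to `u n`,
which stays in `C`, gives
`d²(y, C) + t(1-t) d²(p, u n) ≤ (1-t) d²(y, p) + t d²(y, u n)`.
If `u ⇀ y`, then taking the limsup over `n`, using `ω(y) ≤ ω(p)`, and finally taking the infimum
over `p ∈ C` turns this into `d²(y, C) ≤ t ω(y)`; let `t → 0`.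
-/

/-- Quasiconvexity along geodesics: every sublevel set is geodesically convex. The codomain is an
arbitrary preorder, since the notion involves no arithmetic on values. -/
def GeodesicQuasiconvex {Y β : Type*} [MetricSpace Y] [Preorder β] (E : Y → β) : Prop :=
  ∀ c, GeodesicConvex {x | E x ≤ c}

section

variable {X : Type*} [PseudoMetricSpace X]

theorem le_infDist_sq_iff {C : Set X} (hC : C.Nonempty) {x : X} {a : ℝ} :
    a ≤ Metric.infDist x C ^ 2 ↔ ∀ z ∈ C, a ≤ dist x z ^ 2 := by
  simp only [← Real.sqrt_le_left Metric.infDist_nonneg, ← Real.sqrt_le_left dist_nonneg,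
    Metric.le_infDist hC]

theorem isBoundedUnder_dist_sq {ι : Type*} {l : Filter ι} {u : ι → X}
    (hu : IsBounded (Set.range u)) (x : X) :
    IsBoundedUnder (· ≤ ·) l fun i => dist x (u i) ^ 2 := by
  obtain ⟨R, hR⟩ := hu.subset_closedBall x
  refine isBoundedUnder_of ⟨R ^ 2, fun i => ?_⟩
  exact pow_le_pow_left₀ dist_nonneg (Metric.mem_closedBall'.1 (hR (Set.mem_range_self i))) 2

end

section

variable {Y : Type*} [MetricSpace Y]

theorem LamConvex.geodesicQuasiconvex {lam : ℝ} (hlam : 0 ≤ lam) {E : Y → EReal}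
    (hE : LamConvex lam E) : GeodesicQuasiconvex E := by
  intro c γ hγ h₀ h₁ t ht
  have ht₀ : (0 : EReal) ≤ (t : EReal) := EReal.coe_nonneg.2 ht.1
  have ht₁ : (0 : EReal) ≤ ((1 - t : ℝ) : EReal) := EReal.coe_nonneg.2 (sub_nonneg.2 ht.2)
  have hmod : (0 : EReal) ≤ ((lam / 2 * t * (1 - t) * dist (γ 0) (γ 1) ^ 2 : ℝ) : EReal) :=
    EReal.coe_nonneg.2 <| mul_nonneg
      (mul_nonneg (mul_nonneg (div_nonneg hlam zero_le_two) ht.1) (sub_nonneg.2 ht.2)) (sq_nonneg _)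
  calc E (γ t)
      ≤ ((1 - t : ℝ) : EReal) * E (γ 0) + (t : EReal) * E (γ 1)
        - ((lam / 2 * t * (1 - t) * dist (γ 0) (γ 1) ^ 2 : ℝ) : EReal) := hE γ hγ t ht
    _ ≤ ((1 - t : ℝ) : EReal) * E (γ 0) + (t : EReal) * E (γ 1) := by
        simpa only [sub_zero] using EReal.sub_le_sub le_rfl hmod
    _ ≤ ((1 - t : ℝ) : EReal) * c + (t : EReal) * c :=
        add_le_add (mul_le_mul_of_nonneg_left h₀ ht₁) (mul_le_mul_of_nonneg_left h₁ ht₀)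
    _ = c := by
        rw [← EReal.right_distrib_of_nonneg ht₁ ht₀, ← EReal.coe_add, sub_add_cancel,
          EReal.coe_one, one_mul]

theorem Cat0.infDist_sq_add_le (hY : Cat0 Y) {C : Set Y} (hC : GeodesicConvex C) (y : Y) {p z : Y}
    (hp : p ∈ C) (hz : z ∈ C) {t : ℝ} (ht : t ∈ Set.Icc (0 : ℝ) 1) :
    Metric.infDist y C ^ 2 + t * (1 - t) * dist p z ^ 2
      ≤ (1 - t) * dist y p ^ 2 + t * dist y z ^ 2 := by
  obtain ⟨γ, hγ, rfl, rfl⟩ := hY.1 p z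
  have hmem : γ t ∈ C := hC γ hγ hp hz t ht
  have hinf : Metric.infDist y C ^ 2 ≤ dist y (γ t) ^ 2 :=
    (le_infDist_sq_iff ⟨_, hp⟩).1 le_rfl _ hmem
  have hcat := hY.2 γ hγ y t ht
  simp only [dist_comm _ y] at hcat
  linarith

theorem limsup_add_mul_dist_sq {u : ℕ → Y} (hu : IsBounded (Set.range u)) (y : Y) (a : ℝ) {b : ℝ}
    (hb : 0 ≤ b) :
    limsup (fun n => a + b * dist y (u n) ^ 2) atTop = a + b * asymptoticRadius u y := by
  have hmono : Monotone fun x : ℝ => a + b * x := (monotone_id.const_mul hb).const_add a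
  exact (hmono.map_limsup_of_continuousAt (fun n => dist y (u n) ^ 2) (by fun_prop)
    (isBoundedUnder_dist_sq hu y)
    (isBoundedUnder_of ⟨0, fun _ => sq_nonneg _⟩).isCoboundedUnder_le).symm

theorem add_mul_asymptoticRadius_le {u : ℕ → Y} (hu : IsBounded (Set.range u)) {p y : Y}
    {a b c d : ℝ} (hb : 0 ≤ b) (hd : 0 ≤ d)
    (h : ∀ n, a + b * dist p (u n) ^ 2 ≤ c + d * dist y (u n) ^ 2) :
    a + b * asymptoticRadius u p ≤ c + d * asymptoticRadius u y := by
  rw [← limsup_add_mul_dist_sq hu p a hb, ← limsup_add_mul_dist_sq hu y c hd]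
  have hmono : Monotone fun x : ℝ => c + d * x := (monotone_id.const_mul hd).const_add c
  have hbelow : IsBoundedUnder (· ≥ ·) atTop fun n => a + b * dist p (u n) ^ 2 :=
    isBoundedUnder_of ⟨a, fun n => le_add_of_nonneg_right (by positivity)⟩
  exact limsup_le_limsup (Eventually.of_forall h) hbelow.isCoboundedUnder_le
    (hmono.isBoundedUnder_le_comp (isBoundedUnder_dist_sq hu y))

theorem WeakConv.comp_strictMono {u : ℕ → Y} {y : Y} (hu : WeakConv u y) {φ : ℕ → ℕ}
    (hφ : StrictMono φ) : WeakConv (u ∘ φ) y :=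
  ⟨hu.1.subset (Set.range_comp_subset_range φ u), fun ψ hψ => hu.2 (φ ∘ ψ) (hφ.comp hψ)⟩

theorem WeakConv.asymptoticRadius_le {u : ℕ → Y} {y : Y} (hu : WeakConv u y) (z : Y) :
    asymptoticRadius u y ≤ asymptoticRadius u z :=
  hu.2 id strictMono_id z

theorem WeakConv.infDist_sq_le (hY : Cat0 Y) {C : Set Y} (hC : GeodesicConvex C) {u : ℕ → Y}
    (huC : ∀ n, u n ∈ C) {y : Y} (hu : WeakConv u y) {t : ℝ} (ht : t ∈ Set.Ioo (0 : ℝ) 1) :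
    Metric.infDist y C ^ 2 ≤ t * asymptoticRadius u y := by
  obtain ⟨ht₀, ht₁⟩ := ht
  have ht₁' : 0 < 1 - t := sub_pos.2 ht₁
  have hpoint : ∀ p ∈ C,
      (Metric.infDist y C ^ 2 - t ^ 2 * asymptoticRadius u y) / (1 - t) ≤ dist y p ^ 2 := by
    intro p hp
    have hlimsup : Metric.infDist y C ^ 2 + t * (1 - t) * asymptoticRadius u p
        ≤ (1 - t) * dist y p ^ 2 + t * asymptoticRadius u y :=
      add_mul_asymptoticRadius_le hu.1 (by positivity) ht₀.le fun n =>
        hY.infDist_sq_add_le hC y hp (huC n) ⟨ht₀.le, ht₁.le⟩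
    have hcenter : t * (1 - t) * asymptoticRadius u y ≤ t * (1 - t) * asymptoticRadius u p :=
      mul_le_mul_of_nonneg_left (hu.asymptoticRadius_le p) (by positivity)
    rw [div_le_iff₀ ht₁']
    linarith
  have hinf := (le_infDist_sq_iff ⟨u 0, huC 0⟩).2 hpoint
  rw [div_le_iff₀ ht₁'] at hinf
  refine le_of_mul_le_mul_left ?_ ht₀
  linarith

theorem WeakConv.mem_closure_of_frequently_mem (hY : Cat0 Y) {C : Set Y} (hC : GeodesicConvex C)
    {u : ℕ → Y} {y : Y} (hu : WeakConv u y) (huC : ∃ᶠ n in atTop, u n ∈ C) : y ∈ closure C := by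
  obtain ⟨φ, hφ, hφC⟩ := extraction_of_frequently_atTop huC
  have hlim : Tendsto (fun t : ℝ => t * asymptoticRadius (u ∘ φ) y) (𝓝[>] 0) (𝓝 0) :=
    ((continuous_mul_const _).tendsto' 0 0 (zero_mul _)).mono_left nhdsWithin_le_nhds
  have hle : Metric.infDist y C ^ 2 ≤ 0 := by
    refine ge_of_tendsto hlim ?_
    filter_upwards [Ioo_mem_nhdsGT one_pos] with t ht
    exact (hu.comp_strictMono hφ).infDist_sq_le hY hC hφC ht
  rw [Metric.mem_closure_iff_infDist_zero ⟨_, hφC 0⟩]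
  exact sq_eq_zero_iff.1 (hle.antisymm (sq_nonneg _))

theorem convex_lsc_weakly_lsc_general {β : Type*} [CompleteLinearOrder β] (hY : Cat0 Y)
    {E : Y → β} (hconv : GeodesicQuasiconvex E) (hlsc : LowerSemicontinuous E)
    {yn : ℕ → Y} {y : Y} (hw : WeakConv yn y) :
    E y ≤ liminf (fun n => E (yn n)) atTop := by
  rw [le_liminf_iff]
  intro c hc
  by_contra hfreq
  have hsub : ∃ᶠ n in atTop, yn n ∈ {x | E x ≤ c} := by
    simpa only [not_eventually, not_lt, Set.mem_ofPred_eq] using hfreq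
  have hclosed : IsClosed {x | E x ≤ c} := hlsc.isClosed_preimage c
  have hy : y ∈ {x | E x ≤ c} :=
    hclosed.closure_eq ▸ hw.mem_closure_of_frequently_mem hY (hconv c) hsub
  exact hc.not_ge hy

end

/-- **Convex lower semicontinuous functionals on a CAT(0) space are sequentially weakly
lower semicontinuous**: if `y_n ⇀ y` then `E(y) ≤ liminf_n E(y_n)`. -/
theorem convex_lsc_weakly_lsc {Y : Type*} [MetricSpace Y] [CompleteSpace Y]
    (hY : Cat0 Y) (E : Y → EReal) (hbot : ∀ y, E y ≠ ⊥)
    (hconv : LamConvex 0 E) (hlsc : LowerSemicontinuous E)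
    (yn : ℕ → Y) (y : Y) (hw : WeakConv yn y) :
    E y ≤ Filter.liminf (fun n => E (yn n)) Filter.atTop :=
  convex_lsc_weakly_lsc_general hY (hconv.geodesicQuasiconvex le_rfl) hlsc hw
end

section
/- Let Y be a CAT(0) space, E : Y → ℝ ∪ {+∞} a λ-convex and lower semicontinuous functional with D(E) nonempty, λ ∈ ℝ, and let (y_t)_{t>0} be a gradient flow trajectory for E starting from y ∈ Y. Then t ↦ E(y_t) is locally absolutely continuous on (0,∞), for every t > 0 the right metric speed |ẏ_t⁺| := lim_{h↓0} d(y_{t+h}, y_t)/h exists, and for every t > 0 one has lim_{h↓0} (E(y_t) − E(y_{t+h}))/h = |ẏ_t⁺|² = |∂⁻E|²(y_t). -/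
open Filter MeasureTheory Set Bornology
open scoped ENNReal Topology NNReal

/-!
Integrating the Evolution Variational Inequality against a point of the curve itself shows that the
energy decreases; integrating it against a second trajectory shows that two trajectories contract
at rate `e^{-λt}`. Applied to the curve and its time shifts, the contraction turns any bound on
`d(y_{t+h}, y_t) / h` along a sequence `h ↓ 0` into a bound for all small `h`, so the right speed
`v` exists; it is finite because the monotone energy is differentiable at almost every time.
Letting `h ↓ 0` in the integrated inequality then bounds the slope globally,
`E(y_t) - E(z) ≤ v d(y_t, z) - (λ/2) d²(y_t, z)`, which gives `|∂⁻E|(y_t) ≤ v` and a dissipation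
rate of at most `v²`. The integrated inequality with `z = y_t` on `[t, t + h]` only yields a rate of
at least `v²/2`; on `[t + θh, t + h]` it yields `(1 + θ)v²/2`, and `θ → 1` gives equality. Along
the curve the difference quotients of `E` defining the slope then converge to `v`.
-/

lemma tendsto_const_add_nhdsGT {G : Type*} [TopologicalSpace G] [AddCommGroup G] [PartialOrder G]
    [IsOrderedAddMonoid G] [ContinuousAdd G] (t : G) :
    Tendsto (fun h => t + h) (𝓝[>] 0) (𝓝[>] t) := by
  simp [Tendsto]

/-- `expIntegral K t` is the weight `∫₀ᵗ e^{Kr} dr` of the source term in Grönwall's inequality,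
kept as an integral because the closed form `(e^{Kt} - 1) / K` breaks down at `K = 0`. -/
noncomputable def expIntegral (K t : ℝ) : ℝ := ∫ r in (0 : ℝ)..t, Real.exp (K * r)

@[simp]
lemma expIntegral_zero (K : ℝ) : expIntegral K 0 = 0 :=
  intervalIntegral.integral_same

lemma hasDerivAt_expIntegral (K t : ℝ) :
    HasDerivAt (expIntegral K) (Real.exp (K * t)) t :=
  ((by fun_prop : Continuous fun r => Real.exp (K * r)).integral_hasStrictDerivAt 0 t).hasDerivAt

lemma continuous_expIntegral (K : ℝ) : Continuous (expIntegral K) :=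
  continuous_iff_continuousAt.2 fun t => (hasDerivAt_expIntegral K t).continuousAt

lemma expIntegral_pos (K : ℝ) {t : ℝ} (ht : 0 < t) : 0 < expIntegral K t :=
  intervalIntegral.intervalIntegral_pos_of_pos_on
    (Continuous.intervalIntegrable (by fun_prop) _ _) (fun _ _ => Real.exp_pos _) ht

lemma expIntegral_nonneg (K : ℝ) {t : ℝ} (ht : 0 ≤ t) : 0 ≤ expIntegral K t :=
  intervalIntegral.integral_nonneg ht fun _ _ => (Real.exp_pos _).le

lemma exp_eq_one_add_mul_expIntegral (K t : ℝ) :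
    Real.exp (K * t) = 1 + K * expIntegral K t := by
  have hderiv (r : ℝ) : HasDerivAt (fun r => Real.exp (K * r)) (K * Real.exp (K * r)) r := by
    simpa [mul_comm] using ((hasDerivAt_id r).const_mul K).exp
  rw [expIntegral, ← intervalIntegral.integral_const_mul,
    intervalIntegral.integral_eq_sub_of_hasDerivAt (fun r _ => hderiv r)
      (Continuous.intervalIntegrable (by fun_prop) _ _)]
  simp

lemma expIntegral_le (K : ℝ) {t T : ℝ} (ht : 0 ≤ t) (htT : t ≤ T) :
    expIntegral K t ≤ Real.exp (|K| * T) * t := by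
  have hbound : ∀ r ∈ uIoc 0 t, ‖Real.exp (K * r)‖ ≤ Real.exp (|K| * T) := by
    intro r hr
    rw [uIoc_of_le ht] at hr
    rw [Real.norm_of_nonneg (Real.exp_pos _).le]
    gcongr
    exacts [hr.1.le, le_abs_self K, hr.2.trans htT]
  have hle := intervalIntegral.norm_integral_le_of_norm_le_const hbound
  rw [sub_zero, abs_of_nonneg ht] at hle
  exact (le_abs_self _).trans hle

lemma tendsto_expIntegral_mul_div (K c : ℝ) :
    Tendsto (fun h => expIntegral K (c * h) / h) (𝓝[>] 0) (𝓝 c) := by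
  have hderiv : HasDerivAt (fun h => expIntegral K (c * h)) (Real.exp (K * (c * 0)) * c) 0 := by
    have hlin : HasDerivAt (fun h => c * h) c 0 := by
      simpa using (hasDerivAt_id (0 : ℝ)).const_mul c
    exact (hasDerivAt_expIntegral K (c * 0)).comp 0 hlin
  simpa [inv_mul_eq_div] using hderiv.tendsto_slope_zero_right

lemma tendsto_expIntegral_div (K : ℝ) :
    Tendsto (fun h => expIntegral K h / h) (𝓝[>] 0) (𝓝 1) := by
  simpa using tendsto_expIntegral_mul_div K 1

lemma le_of_ae_deriv_nonpos {f : ℝ → ℝ} {a b : ℝ} (hab : a ≤ b)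
    (hf : AbsolutelyContinuousOnInterval f a b) (hd : ∀ᵐ r, r ∈ Ioo a b → deriv f r ≤ 0) :
    f b ≤ f a := by
  rw [← sub_nonpos, ← hf.integral_deriv_eq_sub, intervalIntegral.integral_of_le hab,
    integral_Ioc_eq_integral_Ioo]
  exact setIntegral_nonpos_ae measurableSet_Ioo hd

lemma le_exp_mul_add_of_ae_deriv_le {w : ℝ → ℝ} {a b K c : ℝ} (hab : a ≤ b)
    (hw : AbsolutelyContinuousOnInterval w a b)
    (hd : ∀ᵐ r, r ∈ Ioo a b → deriv w r ≤ K * w r + c) :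
    w b ≤ Real.exp (K * (b - a)) * w a + c * expIntegral K (b - a) := by
  have hexp (r : ℝ) : HasDerivAt (fun r => Real.exp (K * (b - r)))
      (Real.exp (K * (b - r)) * (-K)) r := by
    simpa using (((hasDerivAt_id r).const_sub b).const_mul K).exp
  have hint (r : ℝ) : HasDerivAt (fun r => c * expIntegral K (b - r))
      (c * (Real.exp (K * (b - r)) * (-1))) r :=
    ((hasDerivAt_expIntegral K (b - r)).comp r ((hasDerivAt_id r).const_sub b)).const_mul c
  have hexpAC : AbsolutelyContinuousOnInterval (fun r => Real.exp (K * (b - r))) a b :=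
    ContDiffOn.absolutelyContinuousOnInterval (by fun_prop)
  have hintAC : AbsolutelyContinuousOnInterval (fun r => c * expIntegral K (b - r)) a b := by
    refine ContDiffOn.absolutelyContinuousOnInterval (ContDiff.contDiffOn ?_)
    refine contDiff_one_iff_deriv.2 ⟨fun r => (hint r).differentiableAt, ?_⟩
    rw [show deriv _ = _ from funext fun r => (hint r).deriv]
    fun_prop
  -- The value at time `b` of the solution of `u' = K u + c` through `(r, w r)` decreases with `r`.
  have hmono := le_of_ae_deriv_nonpos hab ((hexpAC.mul hw).add hintAC) (by
    filter_upwards [hd, hw.ae_differentiableAt] with r hr hdiff hrI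
    have hwr := (hdiff (uIcc_of_le hab ▸ Ioo_subset_Icc_self hrI)).hasDerivAt
    rw [(((hexp r).mul hwr).add (hint r)).deriv]
    have := mul_nonneg (Real.exp_pos (K * (b - r))).le (sub_nonneg.2 (hr hrI))
    linarith)
  simpa using hmono

section AbsolutelyContinuousCurves

variable {Y : Type*} [MetricSpace Y] {y : ℝ → Y} {a b : ℝ}

lemma absolutelyContinuousOnInterval_of_dist_le {X Z : Type*} [PseudoMetricSpace X]
    [PseudoMetricSpace Z] {f : ℝ → X} {g : ℝ → Z} (hg : AbsolutelyContinuousOnInterval g a b)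
    (h : ∀ s ∈ uIcc a b, ∀ t ∈ uIcc a b, dist (f s) (f t) ≤ dist (g s) (g t)) :
    AbsolutelyContinuousOnInterval f a b := by
  rw [absolutelyContinuousOnInterval_iff] at hg ⊢
  intro ε hε
  obtain ⟨δ, hδ, hlt⟩ := hg ε hε
  refine ⟨δ, hδ, fun I hI hIδ => (Finset.sum_le_sum fun i hi => ?_).trans_lt (hlt I hI hIδ)⟩
  exact h _ (hI.1 i hi).1 _ (hI.1 i hi).2

lemma AbsContOn.absolutelyContinuousOnInterval (hab : a ≤ b) (h : AbsContOn y a b) :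
    AbsolutelyContinuousOnInterval y a b := by
  obtain ⟨g, -, hgint, hg⟩ := h
  have hint : IntervalIntegrable g volume a b :=
    (intervalIntegrable_iff_integrableOn_Icc_of_le hab).2 hgint
  have hsub {t : ℝ} (ht : t ∈ Icc a b) : IntervalIntegrable g volume a t :=
    hint.mono_set (uIcc_subset_uIcc_left (uIcc_of_le hab ▸ ht))
  have hle {s t : ℝ} (hs : s ∈ Icc a b) (ht : t ∈ Icc a b) (hst : s ≤ t) :
      dist (y s) (y t) ≤ dist (∫ r in a..s, g r) (∫ r in a..t, g r) := by
    rw [dist_comm (∫ r in a..s, g r), Real.dist_eq,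
      intervalIntegral.integral_interval_sub_left (hsub ht) (hsub hs)]
    exact (hg s hs t ht hst).trans (le_abs_self _)
  refine absolutelyContinuousOnInterval_of_dist_le
    (hint.absolutelyContinuousOnInterval_intervalIntegral left_mem_uIcc) ?_
  rw [uIcc_of_le hab]
  intro s hs t ht
  rcases le_total s t with hst | hts
  · exact hle hs ht hst
  · rw [dist_comm, dist_comm (∫ r in a..s, g r)]
    exact hle ht hs hts

lemma AbsContOn.of_lipschitzOnWith {C : ℝ≥0} (h : LipschitzOnWith C y (Icc a b)) :
    AbsContOn y a b := by
  refine ⟨fun _ => C, fun _ => C.2, integrableOn_const (by simp), fun s hs t ht hst => ?_⟩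
  have hdist := h.dist_le_mul s hs t ht
  rw [dist_comm s t, Real.dist_eq, abs_of_nonneg (sub_nonneg.2 hst)] at hdist
  simpa [mul_comm] using hdist

lemma LocAbsCont.absolutelyContinuousOnInterval_dist (h : LocAbsCont y) (ha : 0 < a)
    (hab : a ≤ b) (z : Y) : AbsolutelyContinuousOnInterval (fun r => dist (y r) z) a b :=
  absolutelyContinuousOnInterval_of_dist_le ((h a b ha hab).absolutelyContinuousOnInterval hab)
    fun _ _ _ _ => abs_dist_sub_le _ _ _

lemma LocAbsCont.absolutelyContinuousOnInterval_dist_sq (h : LocAbsCont y) (ha : 0 < a)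
    (hab : a ≤ b) (z : Y) :
    AbsolutelyContinuousOnInterval (fun r => dist (y r) z ^ 2 / 2) a b := by
  have hdist := h.absolutelyContinuousOnInterval_dist ha hab z
  convert (hdist.mul hdist).const_mul (1 / 2) using 2 with r
  simp only [Pi.mul_apply]
  ring

lemma LocAbsCont.continuousOn (h : LocAbsCont y) : ContinuousOn y (Ioi 0) := by
  intro t (ht : 0 < t)
  have hle : t / 2 ≤ t + 1 := by linarith
  have hcont := (h.absolutelyContinuousOnInterval_dist (half_pos ht) hle (y t)).continuousOn
  rw [uIcc_of_le hle] at hcont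
  have hlim := hcont.continuousAt (Icc_mem_nhds (half_lt_self ht) (lt_add_one t))
  rw [ContinuousAt, dist_self] at hlim
  exact ContinuousAt.continuousWithinAt (tendsto_iff_dist_tendsto_zero.2 hlim)

end AbsolutelyContinuousCurves

section IntegratedEVI

variable {Y : Type*} [MetricSpace Y] {lam : ℝ} {E : Y → EReal} {y : ℝ → Y} {s t : ℝ} {z : Y}

lemma EVI.ae_deriv_le (h : EVI lam E y) (hbot : ∀ z, E z ≠ ⊥) (hz : E z ≠ ⊤) :
    ∀ᵐ t, 0 < t → E (y t) ≠ ⊤ ∧ deriv (fun s => dist (y s) z ^ 2 / 2) t ≤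
      -lam * (dist (y t) z ^ 2 / 2) + ((E z).toReal - (E (y t)).toReal) := by
  have hae := h z
  rw [ae_restrict_iff' measurableSet_Ioi] at hae
  filter_upwards [hae] with t ht hpos
  obtain ⟨d', hd', hle⟩ := ht hpos
  have hne : E (y t) ≠ ⊤ := by
    intro htop
    rw [htop, EReal.coe_add_top, EReal.top_add_coe] at hle
    exact hz (top_le_iff.1 hle)
  refine ⟨hne, ?_⟩
  rw [hd'.deriv]
  lift E (y t) to ℝ using ⟨hne, hbot _⟩ with e
  lift E z to ℝ using ⟨hz, hbot _⟩ with e'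
  norm_cast at hle
  simp only [EReal.toReal_coe]
  linarith

lemma EVI.dist_sq_le_of_forall_le (h : EVI lam E y) (hac : LocAbsCont y) (hbot : ∀ z, E z ≠ ⊥)
    (hz : E z ≠ ⊤) (hs : 0 < s) (hst : s ≤ t) {m : ℝ} (hm : ∀ r ∈ Ioo s t, m ≤ E (y r)) :
    dist (y t) z ^ 2 / 2 ≤ Real.exp (-lam * (t - s)) * (dist (y s) z ^ 2 / 2) +
      ((E z).toReal - m) * expIntegral (-lam) (t - s) := by
  refine le_exp_mul_add_of_ae_deriv_le hst
    (hac.absolutelyContinuousOnInterval_dist_sq hs hst z) ?_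
  filter_upwards [h.ae_deriv_le hbot hz] with r hr hrI
  obtain ⟨hne, hle⟩ := hr (hs.trans hrI.1)
  have hmr : m ≤ (E (y r)).toReal := by
    simpa using EReal.toReal_le_toReal (hm r hrI) (EReal.coe_ne_bot m) hne
  linarith

lemma EVI.energy_antitone (h : EVI lam E y) (hac : LocAbsCont y) (hbot : ∀ z, E z ≠ ⊥)
    (hlsc : LowerSemicontinuous E) (hs : 0 < s) (hst : s ≤ t) : E (y t) ≤ E (y s) := by
  rcases eq_or_ne (E (y s)) ⊤ with hsinf | hsfin
  · exact hsinf ▸ le_top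
  suffices Icc s t ⊆ {r | E (y r) ≤ E (y s)} from this (right_mem_Icc.2 hst)
  have hcont : ContinuousOn y (Icc s t) := hac.continuousOn.mono fun r hr => hs.trans_le hr.1
  have hclosed : IsClosed ({r | E (y r) ≤ E (y s)} ∩ Icc s t) := by
    rw [inter_comm]
    exact hcont.preimage_isClosed_of_isClosed isClosed_Icc (hlsc.isClosed_preimage _)
  refine hclosed.Icc_subset_of_forall_exists_gt (le_refl (E (y s))) fun r ⟨hrE, hr⟩ u hru => ?_
  have hrE : E (y r) ≤ E (y s) := hrE
  by_contra hempty
  have hgt : ∀ q ∈ Ioc r u, E (y s) < E (y q) := fun q hq =>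
    not_le.1 fun hle => hempty ⟨q, hle, hq⟩
  -- Above the level `E (y s) ≥ E (y r)` the curve cannot move away from `y r`.
  have hru' : r ≤ u := le_of_lt hru
  have hrfin : E (y r) ≠ ⊤ := ne_top_of_le_ne_top hsfin hrE
  have hdist := h.dist_sq_le_of_forall_le hac hbot hrfin (hs.trans_le hr.1) hru'
    (m := (E (y r)).toReal) fun q hq => by
      rw [EReal.coe_toReal hrfin (hbot _)]
      exact hrE.trans (hgt q (Ioo_subset_Ioc_self hq)).le
  have heq : y u = y r := by
    rw [dist_self, sub_self] at hdist
    exact dist_eq_zero.1 (pow_eq_zero_iff two_ne_zero |>.1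
      (le_antisymm (by linarith) (sq_nonneg _)))
  exact (hgt u (right_mem_Ioc.2 hru)).not_ge (heq ▸ hrE)

lemma EVI.energy_ne_top (h : EVI lam E y) (hac : LocAbsCont y) (hbot : ∀ z, E z ≠ ⊥)
    (hlsc : LowerSemicontinuous E) (hdom : ∃ z, E z ≠ ⊤) (ht : 0 < t) : E (y t) ≠ ⊤ := by
  obtain ⟨z, hz⟩ := hdom
  have hvol : volume (Ioo 0 t) ≠ 0 := by simpa using ht
  obtain ⟨s, hs, hsfin⟩ :=
    ((frequently_ae_mem_iff.2 hvol).and_eventually (h.ae_deriv_le hbot hz)).exists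
  exact ne_top_of_le_ne_top (hsfin hs.1).1 (h.energy_antitone hac hbot hlsc hs.1 hs.2.le)

/-- The integrated form of the Evolution Variational Inequality: a derivative-free notion of
gradient flow on `(0, ∞)`, which makes pointwise statements at every time (not just almost every
time) accessible. The energy is evaluated at the right endpoint, where it is smallest. -/
structure IntegralEVI (lam : ℝ) (E : Y → EReal) (y : ℝ → Y) : Prop where
  continuousOn : ContinuousOn y (Ioi 0)
  energy_ne_top : ∀ {t}, 0 < t → E (y t) ≠ ⊤
  energy_rightContinuous : ∀ {t}, 0 < t →
    Tendsto (fun r => (E (y r)).toReal) (𝓝[>] t) (𝓝 (E (y t)).toReal)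
  dist_sq_le : ∀ {z}, E z ≠ ⊤ → ∀ {s t}, 0 < s → s ≤ t →
    dist (y t) z ^ 2 / 2 ≤ Real.exp (-lam * (t - s)) * (dist (y s) z ^ 2 / 2) +
      ((E z).toReal - (E (y t)).toReal) * expIntegral (-lam) (t - s)

lemma EVI.integralEVI (h : EVI lam E y) (hac : LocAbsCont y) (hbot : ∀ z, E z ≠ ⊥)
    (hlsc : LowerSemicontinuous E) (hdom : ∃ z, E z ≠ ⊤) : IntegralEVI lam E y := by
  have hfin {t : ℝ} (ht : 0 < t) : E (y t) ≠ ⊤ := h.energy_ne_top hac hbot hlsc hdom ht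
  have hanti {s t : ℝ} (hs : 0 < s) (hst : s ≤ t) : E (y t) ≤ E (y s) :=
    h.energy_antitone hac hbot hlsc hs hst
  refine ⟨hac.continuousOn, hfin, fun {t} ht => ?_, fun {z} hz s t hs hst => ?_⟩
  · have hcont : ContinuousAt y t := hac.continuousOn.continuousAt (Ioi_mem_nhds ht)
    refine (EReal.tendsto_toReal (hfin ht) (hbot _)).comp (tendsto_order.2 ⟨fun c hc => ?_, ?_⟩)
    · exact nhdsWithin_le_nhds (hcont.eventually (hlsc (y t) c hc))
    · intro c hc
      filter_upwards [self_mem_nhdsWithin] with r hr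
      exact (hanti ht (le_of_lt hr)).trans_lt hc
  · refine h.dist_sq_le_of_forall_le hac hbot hz hs hst fun r hr => ?_
    rw [EReal.coe_toReal (hfin (hs.trans_le hst)) (hbot _)]
    exact hanti (hs.trans hr.1) hr.2.le

end IntegratedEVI

namespace IntegralEVI

variable {Y : Type*} [MetricSpace Y] {lam : ℝ} {E : Y → EReal} {x y : ℝ → Y} {s t h : ℝ}

lemma dist_sq_le_energy_sub (H : IntegralEVI lam E y) (hs : 0 < s) (hst : s ≤ t) :
    dist (y t) (y s) ^ 2 / 2 ≤
      ((E (y s)).toReal - (E (y t)).toReal) * expIntegral (-lam) (t - s) := by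
  simpa using H.dist_sq_le (H.energy_ne_top hs) hs hst

lemma antitoneOn_energy (H : IntegralEVI lam E y) :
    AntitoneOn (fun t => (E (y t)).toReal) (Ioi 0) := by
  intro s hs t _ hst
  rcases hst.eq_or_lt with rfl | hlt
  · exact le_rfl
  have hnonneg := (by positivity : 0 ≤ dist (y t) (y s) ^ 2 / 2).trans
    (H.dist_sq_le_energy_sub hs hst)
  exact sub_nonneg.1 (nonneg_of_mul_nonneg_left hnonneg (expIntegral_pos _ (sub_pos.2 hlt)))

lemma shift (H : IntegralEVI lam E y) (hh : 0 ≤ h) : IntegralEVI lam E (fun t => y (t + h)) where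
  continuousOn := H.continuousOn.comp (by fun_prop) fun t ht => add_pos_of_pos_of_nonneg ht hh
  energy_ne_top ht := H.energy_ne_top (add_pos_of_pos_of_nonneg ht hh)
  energy_rightContinuous {t} ht := by
    have hmap : Tendsto (fun r => r + h) (𝓝[>] t) (𝓝[>] (t + h)) := by simp [Tendsto]
    exact (H.energy_rightContinuous (add_pos_of_pos_of_nonneg ht hh)).comp hmap
  dist_sq_le hz s t hs hst := by
    simpa using H.dist_sq_le hz (add_pos_of_pos_of_nonneg hs hh) (add_le_add_left hst h)

lemma tendsto_energy_add (H : IntegralEVI lam E y) (ht : 0 < t) :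
    Tendsto (fun h => (E (y (t + h))).toReal) (𝓝[>] 0) (𝓝 (E (y t)).toReal) :=
  (H.energy_rightContinuous ht).comp (tendsto_const_add_nhdsGT t)

lemma tendsto_add (H : IntegralEVI lam E y) (ht : 0 < t) :
    Tendsto (fun h => y (t + h)) (𝓝[>] 0) (𝓝 (y t)) :=
  (H.continuousOn.continuousAt (Ioi_mem_nhds ht)).tendsto.comp
    ((tendsto_const_add_nhdsGT t).mono_right nhdsWithin_le_nhds)

lemma dist_sq_add_le (hx : IntegralEVI lam E x) (hy : IntegralEVI lam E y) (hs : 0 < s)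
    (hh : 0 ≤ h) :
    dist (x (s + h)) (y (s + h)) ^ 2 ≤ Real.exp (2 * -lam * h) * dist (x s) (y s) ^ 2 +
      2 * expIntegral (-lam) h *
        (Real.exp (-lam * h) * ((E (y s)).toReal - (E (x (s + h))).toReal) +
          ((E (x (s + h))).toReal - (E (y (s + h))).toReal)) := by
  have hle : s ≤ s + h := le_add_of_nonneg_right hh
  have hmove_x := hx.dist_sq_le (hy.energy_ne_top hs) hs hle
  have hmove_y := hy.dist_sq_le (hx.energy_ne_top (hs.trans_le hle)) hs hle
  rw [add_sub_cancel_left] at hmove_x hmove_y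
  rw [dist_comm (y _), dist_comm (y _)] at hmove_y
  have hexp : Real.exp (2 * -lam * h) = Real.exp (-lam * h) * Real.exp (-lam * h) := by
    rw [← Real.exp_add]
    ring_nf
  have hscaled := mul_le_mul_of_nonneg_left hmove_x (Real.exp_pos (-lam * h)).le
  rw [hexp]
  linarith

lemma eventually_slope_dist_sq_lt (hx : IntegralEVI lam E x) (hy : IntegralEVI lam E y)
    (hs : 0 < s) {r : ℝ} (hr : 2 * -lam * dist (x s) (y s) ^ 2 < r) :
    ∀ᶠ h in 𝓝[>] 0,
      h⁻¹ * (dist (x (s + h)) (y (s + h)) ^ 2 - dist (x s) (y s) ^ 2) < r := by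
  have hexp : Tendsto (fun h => Real.exp (-lam * h)) (𝓝[>] 0) (𝓝 1) := by
    have hcont : Continuous fun h => Real.exp (-lam * h) := by fun_prop
    simpa using (hcont.tendsto 0).mono_left nhdsWithin_le_nhds
  have hbracket := (hexp.mul ((hx.tendsto_energy_add hs).const_sub (E (y s)).toReal)).add
    ((hx.tendsto_energy_add hs).sub (hy.tendsto_energy_add hs))
  have hbound := ((tendsto_expIntegral_div (2 * -lam)).const_mul
      (2 * -lam * dist (x s) (y s) ^ 2)).add
    (((tendsto_expIntegral_div (-lam)).const_mul 2).mul hbracket)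
  filter_upwards [hbound.eventually_lt_const (by linarith), self_mem_nhdsWithin] with h hlt hh
  have hh : 0 < h := hh
  have hle := hx.dist_sq_add_le hy hs hh.le
  rw [exp_eq_one_add_mul_expIntegral] at hle
  refine lt_of_le_of_lt ((mul_le_mul_of_nonneg_left (sub_le_sub_right hle _)
    (inv_nonneg.2 hh.le)).trans_eq ?_) hlt
  ring

lemma dist_le_exp_mul_dist (hx : IntegralEVI lam E x) (hy : IntegralEVI lam E y) (hs : 0 < s)
    (hst : s ≤ t) : dist (x t) (y t) ≤ Real.exp (-lam * (t - s)) * dist (x s) (y s) := by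
  have hpos : Icc s t ⊆ Ioi 0 := fun r hr => hs.trans_le hr.1
  have hcont : ContinuousOn (fun r => dist (x r) (y r)) (Icc s t) :=
    continuous_dist.comp_continuousOn
      ((hx.continuousOn.mono hpos).prodMk (hy.continuousOn.mono hpos))
  have hsq := le_gronwallBound_of_liminf_deriv_right_le (ε := 0)
    (f := fun r => dist (x r) (y r) ^ 2) (f' := fun r => 2 * -lam * dist (x r) (y r) ^ 2)
    (hcont.pow 2)
    (fun r hr c hc => (tendsto_const_add_nhdsGT r).frequently <| by
      simpa using (hx.eventually_slope_dist_sq_lt hy (hs.trans_le hr.1) hc).frequently)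
    le_rfl (fun r _ => (add_zero _).ge) t (right_mem_Icc.2 hst)
  have hexp : Real.exp (2 * -lam * (t - s)) = Real.exp (-lam * (t - s)) ^ 2 := by
    rw [← Real.exp_nat_mul]
    push_cast
    ring_nf
  rw [gronwallBound_ε0, hexp, mul_comm, ← mul_pow] at hsq
  exact (sq_le_sq₀ dist_nonneg (by positivity)).1 hsq

lemma dist_add_le_exp_mul (H : IntegralEVI lam E y) (hs : 0 < s) (hst : s ≤ t) (hh : 0 ≤ h) :
    dist (y (t + h)) (y t) ≤ Real.exp (-lam * (t - s)) * dist (y (s + h)) (y s) :=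
  (H.shift hh).dist_le_exp_mul_dist H hs hst

lemma dist_add_le_of_frequently (H : IntegralEVI lam E y) (ht : 0 < t) {L : ℝ}
    (hL : ∀ r > L, ∃ᶠ h in 𝓝[>] 0, dist (y (t + h)) (y t) / h < r) (hh : 0 ≤ h) :
    dist (y (t + h)) (y t) ≤ L * expIntegral (-lam) h := by
  have hcont : ContinuousOn (fun u => dist (y (t + u)) (y t)) (Icc 0 h) :=
    (continuous_id.dist continuous_const).comp_continuousOn
      (H.continuousOn.comp (by fun_prop) fun u hu => add_pos_of_pos_of_nonneg ht hu.1)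
  refine image_le_of_liminf_slope_right_le_deriv_boundary hcont
    (B := fun u => L * expIntegral (-lam) u) (B' := fun u => L * Real.exp (-lam * u)) (by simp)
    ((continuous_expIntegral _).const_mul L).continuousOn
    (fun u _ => ((hasDerivAt_expIntegral _ u).const_mul L).hasDerivWithinAt)
    (fun u hu r hr => ?_) (right_mem_Icc.2 hh)
  refine (tendsto_const_add_nhdsGT u).frequently ?_
  refine ((hL _ ((lt_div_iff₀ (Real.exp_pos (-lam * u))).2 hr)).and_eventually
    self_mem_nhdsWithin).mono fun k ⟨hlt, (hk : 0 < k)⟩ => ?_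
  have hcontr := H.dist_add_le_exp_mul ht (le_add_of_nonneg_right hu.1) hk.le
  have htri := dist_triangle (y (t + u + k)) (y (t + u)) (y t)
  rw [add_sub_cancel_left] at hcontr
  rw [slope_def_field, add_sub_cancel_left, ← add_assoc, div_lt_iff₀ hk]
  rw [lt_div_iff₀ (Real.exp_pos _), div_mul_eq_mul_div, div_lt_iff₀ hk] at hlt
  linarith

lemma exists_isBoundedUnder_dist_div (H : IntegralEVI lam E y) (ht : 0 < t) :
    ∃ s ∈ Ioo 0 t, IsBoundedUnder (· ≤ ·) (𝓝[>] 0) fun h => dist (y (s + h)) (y s) / h := by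
  have hvol : volume (Ioo 0 t) ≠ 0 := by simpa using ht
  obtain ⟨s, hs, hdiff⟩ := ((frequently_ae_mem_iff.2 hvol).and_eventually
    H.antitoneOn_energy.neg.ae_differentiableWithinAt_of_mem).exists
  have hslope := ((hdiff hs.1).differentiableAt
    (Ioi_mem_nhds hs.1)).hasDerivAt.tendsto_slope_zero_right
  refine ⟨s, hs, ((hslope.mul (tendsto_expIntegral_div (-lam))).add_const
    (1 / 2)).isBoundedUnder_le.mono_le ?_⟩
  filter_upwards [self_mem_nhdsWithin] with h (hh : 0 < h)
  have hdrop := H.dist_sq_le_energy_sub hs.1 (le_add_of_nonneg_right hh.le)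
  rw [add_sub_cancel_left, ← div_le_div_iff_of_pos_right (pow_pos hh 2)] at hdrop
  calc dist (y (s + h)) (y s) / h
      ≤ (dist (y (s + h)) (y s) / h) ^ 2 / 2 + 1 / 2 := by
        linarith [two_mul_le_add_sq (dist (y (s + h)) (y s) / h) 1]
    _ = dist (y (s + h)) (y s) ^ 2 / 2 / h ^ 2 + 1 / 2 := by ring
    _ ≤ ((E (y s)).toReal - (E (y (s + h))).toReal) * expIntegral (-lam) h / h ^ 2 + 1 / 2 := by
        gcongr
    _ = _ := by
        simp only [smul_eq_mul]
        ring

lemma isBoundedUnder_dist_div (H : IntegralEVI lam E y) (ht : 0 < t) :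
    IsBoundedUnder (· ≤ ·) (𝓝[>] 0) fun h => dist (y (t + h)) (y t) / h := by
  obtain ⟨s, ⟨hs, hst⟩, L, hL⟩ := H.exists_isBoundedUnder_dist_div ht
  refine ⟨Real.exp (-lam * (t - s)) * L, eventually_map.2 ?_⟩
  filter_upwards [eventually_map.1 hL, self_mem_nhdsWithin] with h hle (hh : 0 < h)
  calc dist (y (t + h)) (y t) / h
      ≤ Real.exp (-lam * (t - s)) * dist (y (s + h)) (y s) / h := by
        gcongr
        exact H.dist_add_le_exp_mul hs hst.le hh.le
    _ = Real.exp (-lam * (t - s)) * (dist (y (s + h)) (y s) / h) := mul_div_assoc _ _ _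
    _ ≤ Real.exp (-lam * (t - s)) * L := by gcongr

end IntegralEVI

/-- `v` is the right metric speed `lim_{h↓0} d(y_{t+h}, y_t) / h` of the curve `y` at time `t`. -/
def HasRightSpeed {Y : Type*} [MetricSpace Y] (y : ℝ → Y) (t v : ℝ) : Prop :=
  Tendsto (fun h => dist (y (t + h)) (y t) / h) (𝓝[>] 0) (𝓝 v)

lemma HasRightSpeed.nonneg {Y : Type*} [MetricSpace Y] {y : ℝ → Y} {t v : ℝ}
    (hv : HasRightSpeed y t v) : 0 ≤ v := by
  refine ge_of_tendsto hv ?_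
  filter_upwards [self_mem_nhdsWithin] with h (hh : 0 < h)
  positivity

lemma HasRightSpeed.tendsto_dist_mul_div {Y : Type*} [MetricSpace Y] {y : ℝ → Y} {t v θ : ℝ}
    (hv : HasRightSpeed y t v) (hθ : 0 < θ) :
    Tendsto (fun h => dist (y (t + θ * h)) (y t) / h) (𝓝[>] 0) (𝓝 (θ * v)) := by
  have hscale : Tendsto (fun h => θ * h) (𝓝[>] 0) (𝓝[>] 0) := by
    refine tendsto_nhdsWithin_iff.2 ⟨?_, ?_⟩
    · simpa using ((continuous_const_mul θ).tendsto 0).mono_left nhdsWithin_le_nhds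
    · filter_upwards [self_mem_nhdsWithin] with h hh using mul_pos hθ hh
  refine ((hv.comp hscale).const_mul θ).congr fun h => ?_
  simp only [Function.comp_apply]
  field_simp

namespace IntegralEVI

variable {Y : Type*} [MetricSpace Y] {lam : ℝ} {E : Y → EReal} {y : ℝ → Y} {s t h v w a b : ℝ}

lemma exists_hasRightSpeed (H : IntegralEVI lam E y) (ht : 0 < t) :
    ∃ v, HasRightSpeed y t v := by
  have hbelow : IsBoundedUnder (· ≥ ·) (𝓝[>] 0) fun h => dist (y (t + h)) (y t) / h := by
    refine ⟨0, eventually_map.2 ?_⟩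
    filter_upwards [self_mem_nhdsWithin] with h (hh : 0 < h)
    positivity
  have habove := H.isBoundedUnder_dist_div ht
  set v := liminf (fun h => dist (y (t + h)) (y t) / h) (𝓝[>] 0)
  have hbound := (tendsto_expIntegral_div (-lam)).const_mul v
  rw [mul_one] at hbound
  refine ⟨v, tendsto_order.2 ⟨fun r hr => eventually_lt_of_lt_liminf hr hbelow, fun r hr => ?_⟩⟩
  filter_upwards [hbound.eventually_lt_const hr, self_mem_nhdsWithin] with h hlt (hh : 0 < h)
  refine lt_of_le_of_lt ?_ hlt
  rw [← mul_div_assoc]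
  gcongr
  exact H.dist_add_le_of_frequently ht
    (fun c hc => frequently_lt_of_liminf_lt habove.isCoboundedUnder_ge hc) hh.le

lemma dist_add_le (H : IntegralEVI lam E y) (ht : 0 < t) (hv : HasRightSpeed y t v)
    (hh : 0 ≤ h) : dist (y (t + h)) (y t) ≤ v * expIntegral (-lam) h :=
  H.dist_add_le_of_frequently ht (fun _ hr => (hv.eventually_lt_const hr).frequently) hh

lemma rightSpeed_le_exp_mul (H : IntegralEVI lam E y) (hs : 0 < s) (hst : s ≤ t)
    (hv : HasRightSpeed y s v) (hw : HasRightSpeed y t w) :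
    w ≤ Real.exp (-lam * (t - s)) * v := by
  refine le_of_tendsto_of_tendsto hw (Tendsto.const_mul _ hv) ?_
  filter_upwards [self_mem_nhdsWithin] with h (hh : 0 < h)
  rw [← mul_div_assoc]
  gcongr
  exact H.dist_add_le_exp_mul hs hst hh.le

lemma energy_sub_le (H : IntegralEVI lam E y) (ht : 0 < t) (hv : HasRightSpeed y t v) {z : Y}
    (hz : E z ≠ ⊤) :
    (E (y t)).toReal - (E z).toReal ≤ v * dist (y t) z + -lam / 2 * dist (y t) z ^ 2 := by
  have hdist : Tendsto (fun h => dist (y (t + h)) z) (𝓝[>] 0) (𝓝 (dist (y t) z)) :=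
    (H.tendsto_add ht).dist tendsto_const_nhds
  have hlim := (((hdist.const_add (dist (y t) z)).const_mul v).div_const 2).add_const
    (-lam / 2 * dist (y t) z ^ 2)
  rw [← two_mul, mul_left_comm, mul_div_cancel_left₀ _ two_ne_zero] at hlim
  refine le_of_tendsto_of_tendsto ((H.tendsto_energy_add ht).sub_const _) hlim ?_
  filter_upwards [self_mem_nhdsWithin] with h (hh : 0 < h)
  have hI := expIntegral_pos (-lam) hh
  have hevi := H.dist_sq_le hz ht (le_add_of_nonneg_right hh.le)
  rw [add_sub_cancel_left, exp_eq_one_add_mul_expIntegral] at hevi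
  have hmove : dist (y t) z - dist (y (t + h)) z ≤ v * expIntegral (-lam) h := by
    have htri := dist_triangle_left (y t) z (y (t + h))
    linarith [H.dist_add_le ht hv hh.le]
  have hsq := mul_le_mul_of_nonneg_right hmove
    (by positivity : 0 ≤ dist (y t) z + dist (y (t + h)) z)
  refine le_of_mul_le_mul_right ?_ hI
  linarith

lemma exists_hasRightSpeed_le (H : IntegralEVI lam E y) (ha : 0 < a) (b : ℝ) :
    ∃ V, 0 ≤ V ∧ ∀ t ∈ Icc a b, ∃ v ≤ V, HasRightSpeed y t v := by
  obtain ⟨v, hv⟩ := H.exists_hasRightSpeed ha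
  have hv0 := hv.nonneg
  refine ⟨Real.exp (|lam| * (b - a)) * v, by positivity, fun t ht => ?_⟩
  obtain ⟨w, hw⟩ := H.exists_hasRightSpeed (ha.trans_le ht.1)
  refine ⟨w, (H.rightSpeed_le_exp_mul ha ht.1 hv hw).trans ?_, hw⟩
  gcongr
  exacts [sub_nonneg.2 ht.1, neg_le_abs lam, ht.2]

lemma exists_forall_energy_sub_le (H : IntegralEVI lam E y) (ha : 0 < a) (b : ℝ) :
    ∃ C, ∀ s ∈ Icc a b, ∀ t ∈ Icc a b, s ≤ t →
      (E (y s)).toReal - (E (y t)).toReal ≤ C * (t - s) := by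
  obtain ⟨V, hV, hspeed⟩ := H.exists_hasRightSpeed_le ha b
  set D := V * Real.exp (|lam| * (b - a)) with hD
  refine ⟨(V + |lam| / 2 * (D * (b - a))) * D, fun s hs t ht hst => ?_⟩
  obtain ⟨v, hvV, hv⟩ := hspeed s hs
  have hst0 : 0 ≤ t - s := sub_nonneg.2 hst
  have hlen : t - s ≤ b - a := sub_le_sub ht.2 hs.1
  have hdist : dist (y s) (y t) ≤ D * (t - s) := by
    have hle := H.dist_add_le (ha.trans_le hs.1) hv hst0
    have hI := expIntegral_le (-lam) hst0 hlen
    rw [add_sub_cancel, dist_comm] at hle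
    rw [abs_neg] at hI
    rw [hD, mul_assoc]
    exact hle.trans (mul_le_mul hvV hI (expIntegral_nonneg _ hst0) hV)
  have hdist_le : dist (y s) (y t) ≤ D * (b - a) := hdist.trans (by gcongr)
  have hlen0 : 0 ≤ D * (b - a) := dist_nonneg.trans hdist_le
  calc (E (y s)).toReal - (E (y t)).toReal
      ≤ v * dist (y s) (y t) + -lam / 2 * dist (y s) (y t) ^ 2 :=
        H.energy_sub_le (ha.trans_le hs.1) hv (H.energy_ne_top (ha.trans_le ht.1))
    _ ≤ V * dist (y s) (y t) + |lam| / 2 * dist (y s) (y t) ^ 2 := by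
        gcongr
        exact neg_le_abs lam
    _ = (V + |lam| / 2 * dist (y s) (y t)) * dist (y s) (y t) := by ring
    _ ≤ (V + |lam| / 2 * (D * (b - a))) * (D * (t - s)) := by gcongr
    _ = (V + |lam| / 2 * (D * (b - a))) * D * (t - s) := by ring

lemma absContOn_energy (H : IntegralEVI lam E y) (ha : 0 < a) (b : ℝ) :
    AbsContOn (fun t => (E (y t)).toReal) a b := by
  obtain ⟨C, hC⟩ := H.exists_forall_energy_sub_le ha b
  refine AbsContOn.of_lipschitzOnWith (LipschitzOnWith.of_le_add_mul' C fun s hs t ht => ?_)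
  have hanti {s t : ℝ} (hs : s ∈ Icc a b) (ht : t ∈ Icc a b) (hst : s ≤ t) :
      (E (y t)).toReal ≤ (E (y s)).toReal :=
    H.antitoneOn_energy (ha.trans_le hs.1) (ha.trans_le ht.1) hst
  rcases le_total s t with hst | hts
  · rw [dist_comm, Real.dist_eq, abs_of_nonneg (sub_nonneg.2 hst)]
    linarith [hC s hs t ht hst]
  · rw [Real.dist_eq, abs_of_nonneg (sub_nonneg.2 hts)]
    linarith [hC t ht s hs hts, hanti ht hs hts]

-- Applying the integrated inequality on `[t + θ h, t + h]` instead of `[t, t + h]` improves the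
-- constant `1 / 2` to `(1 + θ) / 2`, which becomes sharp as `θ → 1`.
lemma eventually_lt_energy_sub_div_of_lt_mul (H : IntegralEVI lam E y) (ht : 0 < t)
    (hv : HasRightSpeed y t v) {θ c : ℝ} (hθ : θ ∈ Ioo 0 1) (hc : c < (1 + θ) / 2 * v ^ 2) :
    ∀ᶠ h in 𝓝[>] 0, c < ((E (y t)).toReal - (E (y (t + h))).toReal) / h := by
  obtain ⟨hθ0, hθ1⟩ : 0 < θ ∧ 0 < 1 - θ := ⟨hθ.1, sub_pos.2 hθ.2⟩
  have hexp : Tendsto (fun h => Real.exp (-lam * ((1 - θ) * h))) (𝓝[>] 0) (𝓝 1) := by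
    have hcont : Continuous fun h => Real.exp (-lam * ((1 - θ) * h)) := by fun_prop
    simpa using (hcont.tendsto 0).mono_left nhdsWithin_le_nhds
  have hlower := (((Tendsto.pow hv 2).div_const 2).sub
    (hexp.mul (((hv.tendsto_dist_mul_div hθ0).pow 2).div_const 2))).div
    (tendsto_expIntegral_mul_div (-lam) (1 - θ)) hθ1.ne'
  have hval : c < (v ^ 2 / 2 - 1 * ((θ * v) ^ 2 / 2)) / (1 - θ) := by
    rw [lt_div_iff₀ hθ1]
    linarith [mul_lt_mul_of_pos_right hc hθ1]
  filter_upwards [hlower.eventually_const_lt hval, self_mem_nhdsWithin] with h hlt (hh : 0 < h)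
  refine hlt.trans_le ((div_le_iff₀ (div_pos (expIntegral_pos _ (mul_pos hθ1 hh)) hh)).2 ?_)
  have hevi := H.dist_sq_le (H.energy_ne_top ht) (s := t + θ * h) (t := t + h) (by positivity)
    (by linarith [mul_pos hθ1 hh])
  rw [show t + h - (t + θ * h) = (1 - θ) * h by ring, ← sub_le_iff_le_add'] at hevi
  calc _ = (dist (y (t + h)) (y t) ^ 2 / 2 - Real.exp (-lam * ((1 - θ) * h)) *
          (dist (y (t + θ * h)) (y t) ^ 2 / 2)) / h ^ 2 := by ring
    _ ≤ ((E (y t)).toReal - (E (y (t + h))).toReal) *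
          expIntegral (-lam) ((1 - θ) * h) / h ^ 2 := by gcongr
    _ = _ := by ring

lemma eventually_lt_energy_sub_div (H : IntegralEVI lam E y) (ht : 0 < t)
    (hv : HasRightSpeed y t v) {c : ℝ} (hc : c < v ^ 2) :
    ∀ᶠ h in 𝓝[>] 0, c < ((E (y t)).toReal - (E (y (t + h))).toReal) / h := by
  have hlim : Tendsto (fun θ : ℝ => (1 + θ) / 2 * v ^ 2) (𝓝[<] 1) (𝓝 (v ^ 2)) := by
    have hcont : Continuous fun θ : ℝ => (1 + θ) / 2 * v ^ 2 := by fun_prop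
    simpa using (hcont.tendsto 1).mono_left nhdsWithin_le_nhds
  obtain ⟨θ, hcθ, hθ⟩ := ((hlim.eventually_const_lt hc).and (Ioo_mem_nhdsLT one_pos)).exists
  exact H.eventually_lt_energy_sub_div_of_lt_mul ht hv hθ hcθ

lemma tendsto_energy_sub_div (H : IntegralEVI lam E y) (ht : 0 < t)
    (hv : HasRightSpeed y t v) :
    Tendsto (fun h => ((E (y t)).toReal - (E (y (t + h))).toReal) / h) (𝓝[>] 0) (𝓝 (v ^ 2)) := by
  have hupper : Tendsto (fun h => v * (dist (y (t + h)) (y t) / h) +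
      -lam / 2 * (dist (y (t + h)) (y t) / h) * dist (y (t + h)) (y t)) (𝓝[>] 0)
      (𝓝 (v ^ 2)) := by
    have hdist : Tendsto (fun h => dist (y (t + h)) (y t)) (𝓝[>] 0) (𝓝 0) :=
      tendsto_iff_dist_tendsto_zero.1 (H.tendsto_add ht)
    simpa [sq] using (Tendsto.const_mul v hv).add ((Tendsto.const_mul (-lam / 2) hv).mul hdist)
  refine tendsto_order.2 ⟨fun c hc => H.eventually_lt_energy_sub_div ht hv hc, fun c hc => ?_⟩
  filter_upwards [hupper.eventually_lt_const hc, self_mem_nhdsWithin] with h hlt (hh : 0 < h)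
  refine lt_of_le_of_lt ?_ hlt
  have hle := H.energy_sub_le ht hv (H.energy_ne_top (add_pos ht hh))
  rw [dist_comm] at hle
  rw [div_le_iff₀ hh]
  refine hle.trans_eq ?_
  field_simp

end IntegralEVI

section DescendingSlope

variable {Y : Type*} [MetricSpace Y] {E : Y → EReal} {y : Y} {v : ℝ}

lemma descendingSlope_le_ofReal {C : ℝ} (hbot : ∀ z, E z ≠ ⊥) (hy : E y ≠ ⊤)
    (hle : ∀ z, E z ≠ ⊤ →
      (E y).toReal - (E z).toReal ≤ v * dist y z + C * dist y z ^ 2) :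
    descendingSlope E y ≤ ENNReal.ofReal v := by
  rw [descendingSlope, if_neg hy]
  have hlim : Tendsto (fun z => ENNReal.ofReal (v + C * dist y z)) (𝓝[≠] y)
      (𝓝 (ENNReal.ofReal v)) := by
    refine ENNReal.tendsto_ofReal ?_
    have hcont : Continuous fun z => v + C * dist y z := by fun_prop
    simpa using (hcont.tendsto y).mono_left nhdsWithin_le_nhds
  rcases (𝓝[≠] y).eq_or_neBot with hisolated | hne
  · simp [hisolated]
  rw [← hlim.limsup_eq]
  refine limsup_le_limsup ?_
  filter_upwards [self_mem_nhdsWithin] with z hz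
  by_cases hz' : E z = ⊤
  · simp [hz']
  have hpos : 0 < dist y z := dist_pos.2 (Ne.symm hz)
  refine ENNReal.ofReal_le_ofReal ((div_le_iff₀ hpos).2 ?_)
  rw [EReal.toReal_sub hy (hbot y) hz' (hbot z)]
  linarith [hle z hz']

lemma ofReal_le_descendingSlope {ι : Type*} {l : Filter ι} [NeBot l] {u : ι → Y}
    (hbot : ∀ z, E z ≠ ⊥) (hy : E y ≠ ⊤) (hu : Tendsto u l (𝓝[≠] y))
    (hfin : ∀ᶠ i in l, E (u i) ≠ ⊤)
    (hlim : Tendsto (fun i => ((E y).toReal - (E (u i)).toReal) / dist y (u i)) l (𝓝 v)) :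
    ENNReal.ofReal v ≤ descendingSlope E y := by
  rw [descendingSlope, if_neg hy]
  have hratio : Tendsto (fun i => ENNReal.ofReal ((E y - E (u i)).toReal / dist y (u i))) l
      (𝓝 (ENNReal.ofReal v)) := by
    refine (ENNReal.tendsto_ofReal hlim).congr' ?_
    filter_upwards [hfin] with i hi
    rw [EReal.toReal_sub hy (hbot y) hi (hbot _)]
  rw [← hratio.limsup_eq]
  exact limsup_le_limsup_of_le (f := map u l)
    (u := fun z => ENNReal.ofReal ((E y - E z).toReal / dist y z)) hu

end DescendingSlope

lemma IntegralEVI.descendingSlope_eq {Y : Type*} [MetricSpace Y] {lam : ℝ} {E : Y → EReal}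
    {y : ℝ → Y} {t v : ℝ} (H : IntegralEVI lam E y) (hbot : ∀ z, E z ≠ ⊥) (ht : 0 < t)
    (hv : HasRightSpeed y t v) : descendingSlope E (y t) = ENNReal.ofReal v := by
  have htop := H.energy_ne_top ht
  refine (descendingSlope_le_ofReal hbot htop fun z hz => H.energy_sub_le ht hv hz).antisymm ?_
  rcases hv.nonneg.eq_or_lt with rfl | hvpos
  · simp
  have hdist : ∀ᶠ h in 𝓝[>] 0, 0 < dist (y (t + h)) (y t) := by
    filter_upwards [hv.eventually_const_lt hvpos, self_mem_nhdsWithin] with h hlt hh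
    exact (div_pos_iff_of_pos_right hh).1 hlt
  have hcurve : Tendsto (fun h => y (t + h)) (𝓝[>] 0) (𝓝[≠] y t) :=
    tendsto_nhdsWithin_iff.2 ⟨H.tendsto_add ht, hdist.mono fun h => dist_pos.1⟩
  have hfin : ∀ᶠ h in 𝓝[>] 0, E (y (t + h)) ≠ ⊤ := by
    filter_upwards [self_mem_nhdsWithin] with h hh using H.energy_ne_top (add_pos ht hh)
  refine ofReal_le_descendingSlope hbot htop hcurve hfin ?_
  have hratio := (H.tendsto_energy_sub_div ht hv).div hv hvpos.ne'
  rw [sq, mul_div_cancel_right₀ _ hvpos.ne'] at hratio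
  refine hratio.congr' ?_
  filter_upwards [self_mem_nhdsWithin] with h (hh : 0 < h)
  rw [Pi.div_apply, div_div_div_cancel_right₀ hh.ne', dist_comm]

theorem gradientFlow_sharp_dissipation_general {Y : Type*} [MetricSpace Y] (lam : ℝ)
    (E : Y → EReal) (hbot : ∀ y, E y ≠ ⊥) (hlsc : LowerSemicontinuous E) (hdom : ∃ y, E y ≠ ⊤)
    (ytraj : ℝ → Y) (hac : LocAbsCont ytraj) (hevi : EVI lam E ytraj) :
    (∀ t : ℝ, 0 < t → E (ytraj t) ≠ ⊤) ∧
      (∀ a b : ℝ, 0 < a → a ≤ b → AbsContOn (fun t => (E (ytraj t)).toReal) a b) ∧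
      ∀ t : ℝ, 0 < t → ∃ v : ℝ, 0 ≤ v ∧
        Filter.Tendsto (fun h => dist (ytraj (t + h)) (ytraj t) / h)
          (nhdsWithin 0 (Set.Ioi 0)) (nhds v) ∧
        Filter.Tendsto (fun h => ((E (ytraj t)).toReal - (E (ytraj (t + h))).toReal) / h)
          (nhdsWithin 0 (Set.Ioi 0)) (nhds (v ^ 2)) ∧
        descendingSlope E (ytraj t) = ENNReal.ofReal v := by
  have H : IntegralEVI lam E ytraj := hevi.integralEVI hac hbot hlsc hdom
  refine ⟨fun t ht => H.energy_ne_top ht, fun a b ha _ => H.absContOn_energy ha b,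
    fun t ht => ?_⟩
  obtain ⟨v, hv⟩ := H.exists_hasRightSpeed ht
  exact ⟨v, hv.nonneg, hv, H.tendsto_energy_sub_div ht hv, H.descendingSlope_eq hbot ht hv⟩

/-- **Sharp dissipation rate along a gradient flow trajectory** of a `λ`-convex lower
semicontinuous functional on a CAT(0) space: `t ↦ E(y_t)` is locally absolutely
continuous on `(0,∞)`, the right metric speed `|ẏ_t⁺|` exists for every `t > 0`, and
`lim_{h↓0} (E(y_t) − E(y_{t+h}))/h = |ẏ_t⁺|² = |∂⁻E|²(y_t)` for every `t > 0`. -/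
theorem gradientFlow_sharp_dissipation {Y : Type*} [MetricSpace Y] [CompleteSpace Y]
    (hY : Cat0 Y) (lam : ℝ) (E : Y → EReal) (hbot : ∀ y, E y ≠ ⊥)
    (hconv : LamConvex lam E) (hlsc : LowerSemicontinuous E) (hdom : ∃ y, E y ≠ ⊤)
    (y₀ : Y) (ytraj : ℝ → Y) (hgf : GradientFlow lam E y₀ ytraj) :
    (∀ t : ℝ, 0 < t → E (ytraj t) ≠ ⊤) ∧
      (∀ a b : ℝ, 0 < a → a ≤ b → AbsContOn (fun t => (E (ytraj t)).toReal) a b) ∧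
      ∀ t : ℝ, 0 < t → ∃ v : ℝ, 0 ≤ v ∧
        Filter.Tendsto (fun h => dist (ytraj (t + h)) (ytraj t) / h)
          (nhdsWithin 0 (Set.Ioi 0)) (nhds v) ∧
        Filter.Tendsto (fun h => ((E (ytraj t)).toReal - (E (ytraj (t + h))).toReal) / h)
          (nhdsWithin 0 (Set.Ioi 0)) (nhds (v ^ 2)) ∧
        descendingSlope E (ytraj t) = ENNReal.ofReal v :=
  gradientFlow_sharp_dissipation_general lam E hbot hlsc hdom ytraj hgf.1 hgf.2.2
end
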